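/- Let 𝕊² be the unit sphere in ℝ³ and let ℱ be a dimension-one foliation on the 3-manifold 𝕊² × 𝕃₊. Then there is α ∈ 𝕃₊ such that for every z ∈ 𝕊² the set {z} × (α,→) is contained in a single leaf of ℱ (the restriction of ℱ to 𝕊² × (α,→) is the trivial product foliation by long rays). -/

import Mathlib

noncomputable section

open Set Topology Filter

universe u

/-! ### The long ray and the long line -/

/-- The first uncountable ordinal `ω₁`, viewed as the linearly ordered set of all
countable ordinals. -/
def Omega1 : Type 1 := {o : Ordinal.{0} // o < (Cardinal.aleph 1).ord}

instance : LinearOrder Omega1 :=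
  inferInstanceAs (LinearOrder {o : Ordinal.{0} // o < (Cardinal.aleph 1).ord})

/-- `ω₁` carries the order topology. -/
instance : TopologicalSpace Omega1 := Preorder.topology Omega1

instance : OrderTopology Omega1 := ⟨rfl⟩

/-- The underlying countable ordinal of an element of `ω₁`. -/
def Omega1.toOrdinal : Omega1 → Ordinal.{0} := Subtype.val

/-- The closed long ray `𝕃≥0`: the set `ω₁ × [0,1)` with the lexicographic order and the
order topology. -/
def ClosedLongRay : Type 1 := Omega1 ×ₗ (Set.Ico (0:ℝ) 1)

instance : LinearOrder ClosedLongRay :=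
  inferInstanceAs (LinearOrder (Omega1 ×ₗ (Set.Ico (0:ℝ) 1)))

instance : TopologicalSpace ClosedLongRay := Preorder.topology ClosedLongRay

instance : OrderTopology ClosedLongRay := ⟨rfl⟩

/-- The long ray `𝕃₊`: the closed long ray with its least element removed, with the
subspace topology (an element is non-minimal iff something is below it). -/
def LongRay : Type 1 := {x : ClosedLongRay // ∃ y, y < x}

instance : LinearOrder LongRay :=
  inferInstanceAs (LinearOrder {x : ClosedLongRay // ∃ y, y < x})

instance : TopologicalSpace LongRay :=
  inferInstanceAs (TopologicalSpace {x : ClosedLongRay // ∃ y, y < x})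

/-- The inclusion of the long ray into the closed long ray. -/
def LongRay.toCLR : LongRay → ClosedLongRay := Subtype.val

/-- The long line `𝕃`: an order-reversed copy of `𝕃₊` placed below the closed long ray
`𝕃≥0`, with the order topology. -/
def LongLine : Type 1 := (OrderDual LongRay) ⊕ₗ ClosedLongRay

instance : LinearOrder LongLine :=
  inferInstanceAs (LinearOrder ((OrderDual LongRay) ⊕ₗ ClosedLongRay))

instance : TopologicalSpace LongLine := Preorder.topology LongLine

instance : OrderTopology LongLine := ⟨rfl⟩

/-- The identification of `𝕃₊` with the set of positive elements of `𝕃`. -/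
def LongRay.inL (a : LongRay) : LongLine := toLex (Sum.inr a.toCLR)

/-- The natural order-reversing involution `x ↦ -x` of the long line, exchanging the two
copies of `𝕃₊` and fixing the least element `0` of `𝕃≥0`. -/
noncomputable def LongLine.neg (x : LongLine) : LongLine :=
  match ofLex x with
  | Sum.inl a => toLex (Sum.inr (OrderDual.ofDual a).toCLR)
  | Sum.inr b =>
      @dite _ (∃ y, y < b) (Classical.dec _)
        (fun h => toLex (Sum.inl (OrderDual.toDual (⟨b, h⟩ : LongRay))))
        (fun _ => x)

/-- A subset of the long ray is a *club* if it is closed (in the topology of `𝕃₊`) and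
unbounded (i.e. cofinal). -/
def ClubInLongRay (C : Set LongRay) : Prop :=
  IsClosed C ∧ ∀ β : LongRay, ∃ α ∈ C, β ≤ α

/-- A topological space `X` is *squat* if every continuous map `𝕃₊ → X` is eventually
constant. -/
def Squat (X : Type*) [TopologicalSpace X] : Prop :=
  ∀ f : LongRay → X, Continuous f → ∃ (β : LongRay) (x : X), ∀ α, β ≤ α → f α = x

/-! ### Manifolds and foliations -/

/-- A (topological) `n`-manifold: a nonempty Hausdorff space in which every point has an
open neighbourhood homeomorphic to `ℝⁿ`. -/
def IsTopManifold (M : Type u) [TopologicalSpace M] (n : ℕ) : Prop :=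
  Nonempty M ∧ T2Space M ∧
    ∀ x : M, ∃ U : Set M, x ∈ U ∧ IsOpen U ∧ Nonempty (U ≃ₜ (Fin n → ℝ))

/-- A foliation of dimension `p` and codimension `q` on a space `M`: a family of charts
`φᵢ : Uᵢ ≃ₜ ℝᵖ × ℝ^q` on open sets covering `M` such that all coordinate transformations
have the form `(x, y) ↦ (g (x, y), h y)`, i.e. the last `q` coordinates of the image
depend only on the last `q` coordinates of the argument. -/
structure Foliation (M : Type u) [TopologicalSpace M] (p q : ℕ) where
  /-- index type of the atlas -/
  ι : Type u
  /-- chart domains -/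
  U : ι → Set M
  /-- the charts -/
  chart : (i : ι) → ((U i) ≃ₜ ((Fin p → ℝ) × (Fin q → ℝ)))
  isOpen : ∀ i, IsOpen (U i)
  covers : ∀ x : M, ∃ i, x ∈ U i
  compat : ∀ i j (x y : M) (hxi : x ∈ U i) (hxj : x ∈ U j) (hyi : y ∈ U i) (hyj : y ∈ U j),
    (chart i ⟨x, hxi⟩).2 = (chart i ⟨y, hyi⟩).2 → (chart j ⟨x, hxj⟩).2 = (chart j ⟨y, hyj⟩).2

namespace Foliation

variable {M : Type u} [TopologicalSpace M] {p q : ℕ}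

/-- The set `φᵢ⁻¹ (ℝᵖ × {y})` in the chart domain `Uᵢ`. -/
def plaqueFibre (F : Foliation M p q) (i : F.ι) (y : Fin q → ℝ) : Set M :=
  {w : M | ∃ hw : w ∈ F.U i, (F.chart i ⟨w, hw⟩).2 = y}

/-- A *plaque* of the foliation: a connected component of a set of the form
`φᵢ⁻¹ (ℝᵖ × {y})`. -/
def IsPlaque (F : Foliation M p q) (P : Set M) : Prop :=
  ∃ (i : F.ι) (y : Fin q → ℝ) (z : M), z ∈ F.plaqueFibre i y ∧
    P = connectedComponentIn (F.plaqueFibre i y) z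

/-- Two points lie in a common plaque. -/
def samePlaque (F : Foliation M p q) (x y : M) : Prop :=
  ∃ P, F.IsPlaque P ∧ x ∈ P ∧ y ∈ P

/-- The leaf relation: the smallest equivalence relation relating any two points that lie
in a common plaque. -/
def leafRel (F : Foliation M p q) : M → M → Prop := Relation.EqvGen F.samePlaque

/-- The *leaves* of the foliation: equivalence classes of the leaf relation. -/
def IsLeaf (F : Foliation M p q) (L : Set M) : Prop :=
  ∃ x : M, L = {y | F.leafRel x y}

/-- The *leaf topology* on a leaf (or any subset) `L`: the topology generated by the
plaques contained in `L`. -/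
def leafTopology (F : Foliation M p q) (L : Set M) : TopologicalSpace L :=
  TopologicalSpace.generateFrom
    {s : Set L | ∃ P, F.IsPlaque P ∧ P ⊆ L ∧ s = Subtype.val ⁻¹' P}

/-- A leaf is *long* if it is not metrisable in its leaf topology. -/
def IsLongLeaf (F : Foliation M p q) (L : Set M) : Prop :=
  F.IsLeaf L ∧ ¬ @TopologicalSpace.MetrizableSpace L (F.leafTopology L)

/-- A subset of `M` is *saturated* by the foliation if it is a union of leaves. -/
def Saturated (F : Foliation M p q) (S : Set M) : Prop :=
  ∀ x ∈ S, ∀ y, F.leafRel x y → y ∈ S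

end Foliation

/-!
Every countable subset of `𝕃₊` is bounded, so each `z ∈ 𝕊²` has a neighbourhood `V` such that beyond
some height `β` every bounded piece `V × (β, γ]` lies in a single chart. If one ray `{z} × (a, →)`
lies in a leaf, then the set of all `z` with this property is open and closed, hence it is `𝕊²`, and
by separability one height `a` works for all `z`.

If no such ray exists, then the leaf arcs starting at a given point of a tube `V × (β, →)` are
bounded, since otherwise the points where they first reach the various heights would eventually have
a constant first coordinate and fill a vertical ray. Closing off under countably many such bounds
gives a height `α` which no leaf arc crosses, so that `𝕊² × {α}` is saturated. Moving away from `z`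
in both directions of its leaf by the same small amount then assigns to every `z ∈ 𝕊²` an unordered
pair of distinct points near `z`, continuously in `z`. No such assignment exists: the squares of the
differences of the stereographic coordinates of the two points, taken on the two hemispheres, are
nonvanishing functions on discs, but their quotient has degree four on the equator.
-/

/-! ### Linear orders with bounded countable subsets -/

section OmegaOneLike

variable {Λ : Type*}

theorem exists_mem_forall_of_antitone [Preorder Λ] [IsDirectedOrder Λ] [Nonempty Λ]
    [CountableInterFilter (atTop : Filter Λ)] {κ : Type*} {C : Set κ} (hC : C.Countable)
    {P : κ → Λ → Prop} (hP : ∀ c, Antitone (P c)) (h : ∀ ρ, ∃ c ∈ C, P c ρ) :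
    ∃ c ∈ C, ∀ ρ, P c ρ := by
  by_contra! hfail
  have hev : ∀ c ∈ C, ∀ᶠ ρ in atTop, ¬ P c ρ := fun c hc => by
    obtain ⟨ρ, hρ⟩ := hfail c hc
    exact (eventually_ge_atTop ρ).mono fun ρ' hle hP' => hρ (hP c hle hP')
  obtain ⟨ρ, hρ⟩ := ((eventually_countable_ball hC).2 hev).exists
  obtain ⟨c, hc, hcρ⟩ := h ρ
  exact hρ c hc hcρ

theorem eventually_forall_of_antitone [Preorder Λ] [IsDirectedOrder Λ] [Nonempty Λ]
    [CountableInterFilter (atTop : Filter Λ)] {X : Type*} {l : Filter X}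
    [l.IsCountablyGenerated] {P : X → Λ → Prop} (hP : ∀ x, Antitone (P x))
    (h : ∀ ρ, ∀ᶠ x in l, P x ρ) : ∀ᶠ x in l, ∀ ρ, P x ρ := by
  obtain ⟨V, hV⟩ := l.exists_antitone_basis
  obtain ⟨n, -, hn⟩ := exists_mem_forall_of_antitone (P := fun n ρ => ∀ x ∈ V n, P x ρ)
    countable_univ (fun n ρ ρ' hle hx x hxV => hP x hle (hx x hxV)) fun ρ => by
      obtain ⟨n, hn⟩ := hV.mem_iff.1 (h ρ)
      exact ⟨n, mem_univ n, hn⟩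
  exact hV.mem_iff.2 ⟨n, fun x hx ρ => hn ρ x hx⟩

theorem exists_forall_lt_of_countable [Preorder Λ] [IsDirectedOrder Λ] [Nonempty Λ]
    [NoMaxOrder Λ] [CountableInterFilter (atTop : Filter Λ)] {s : Set Λ} (hs : s.Countable) :
    ∃ b, ∀ a ∈ s, a < b :=
  ((eventually_countable_ball hs).2 fun a _ => eventually_gt_atTop a).exists

variable [ConditionallyCompleteLinearOrder Λ] [TopologicalSpace Λ] [OrderTopology Λ]
  [NoMaxOrder Λ] [CountableInterFilter (atTop : Filter Λ)]

theorem exists_isLUB_tendsto_nhdsLT_of_strictMono {β : ℕ → Λ} (hβ : StrictMono β) :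
    ∃ γ, IsLUB (range β) γ ∧ Tendsto β atTop (𝓝[<] γ) := by
  have : Nonempty Λ := ⟨β 0⟩
  obtain ⟨b, hb⟩ := exists_forall_lt_of_countable (countable_range β)
  have hbdd : BddAbove (range β) := ⟨b, fun a ha => (hb a ha).le⟩
  refine ⟨⨆ n, β n, isLUB_ciSup hbdd, tendsto_nhdsWithin_iff.2
    ⟨tendsto_atTop_ciSup hβ.monotone hbdd, Eventually.of_forall fun n => ?_⟩⟩
  exact (hβ n.lt_succ_self).trans_le (le_ciSup hbdd _)

theorem exists_gt_forall_exists_mem_Ioo_le (g : Λ → Λ) (b : Λ) :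
    ∃ γ > b, ∀ a < γ, ∃ c ∈ Ioo a γ, g c ≤ γ := by
  choose s hs using fun a : Λ => exists_gt a
  let β : ℕ → Λ := fun n => Nat.rec b (fun _ a => max (g a) (s a)) n
  have hβ : StrictMono β := strictMono_nat_of_lt_succ fun n =>
    (hs (β n)).trans_le (le_max_right (g (β n)) _)
  obtain ⟨γ, hγ, -⟩ := exists_isLUB_tendsto_nhdsLT_of_strictMono hβ
  have hlt : ∀ n, β n < γ := fun n => (hβ n.lt_succ_self).trans_le (hγ.1 ⟨n + 1, rfl⟩)
  refine ⟨γ, hlt 0, fun a ha => ?_⟩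
  obtain ⟨_, ⟨n, rfl⟩, hn⟩ := (lt_isLUB_iff hγ).1 ha
  exact ⟨β n, ⟨hn, hlt n⟩, (le_max_left (g (β n)) (s (β n))).trans (hγ.1 ⟨n + 1, rfl⟩)⟩

theorem exists_forall_of_forall_exists_lt [Nonempty Λ] {P : Λ → Λ → Prop}
    (hmono : ∀ γ, Monotone fun β => P β γ) (hanti : ∀ β, Antitone (P β))
    (h : ∀ γ, ∃ β < γ, P β γ) : ∃ β, ∀ γ, P β γ := by
  by_contra! hfail
  choose g hg using hfail
  obtain ⟨γ, -, hγ⟩ := exists_gt_forall_exists_mem_Ioo_le g (Classical.arbitrary Λ)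
  obtain ⟨b, hb, hbP⟩ := h γ
  obtain ⟨c, hc, hgc⟩ := hγ b hb
  exact hg c (hmono _ hc.1.le (hanti _ hgc hbP))

theorem exists_forall_dist_lt_of_continuousWithinAt_Iio {X : Type*} [PseudoMetricSpace X]
    {f : Λ → X} {b : Λ} (hf : ∀ γ > b, ContinuousWithinAt f (Iio γ) γ) {ε : ℝ} (hε : 0 < ε) :
    ∃ a ≥ b, ∀ γ ≥ a, dist (f γ) (f a) < ε := by
  by_contra! hfail
  choose! g hg hgε using hfail
  let β : ℕ → Λ := fun n => Nat.rec b (fun _ b => g b) n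
  have hb : ∀ n, b ≤ β n := fun n => by
    induction n with
    | zero => exact le_rfl
    | succ n ih => exact ih.trans (hg _ ih)
  have hjump : ∀ n, ε ≤ dist (f (β (n + 1))) (f (β n)) := fun n => hgε _ (hb n)
  have hβ : StrictMono β := strictMono_nat_of_lt_succ fun n => by
    refine (hg _ (hb n)).lt_of_ne fun heq => (hjump n).not_gt ?_
    rwa [show β (n + 1) = β n from heq.symm, dist_self]
  obtain ⟨γ, hγ, hlim⟩ := exists_isLUB_tendsto_nhdsLT_of_strictMono hβ
  have hbγ : b < γ := (hβ Nat.zero_lt_one).trans_le (hγ.1 ⟨1, rfl⟩)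
  obtain ⟨N, hN⟩ := Metric.cauchySeq_iff'.1 ((hf γ hbγ).tendsto.comp hlim).cauchySeq ε hε
  exact (hjump N).not_gt (hN (N + 1) N.le_succ)

theorem exists_forall_eq_of_continuousWithinAt_Iio {X : Type*} [MetricSpace X] {f : Λ → X}
    {b : Λ} (hf : ∀ γ > b, ContinuousWithinAt f (Iio γ) γ) : ∃ a ≥ b, ∀ γ ≥ a, f γ = f a := by
  have : Nonempty Λ := ⟨b⟩
  have hpos : ∀ n : ℕ, (0 : ℝ) < 1 / ((n : ℝ) + 1) := fun n => Nat.one_div_pos_of_nat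
  choose a hab ha using fun n : ℕ => exists_forall_dist_lt_of_continuousWithinAt_Iio hf (hpos n)
  obtain ⟨c, hc⟩ := exists_forall_lt_of_countable (countable_range a)
  have hac : ∀ n, a n ≤ c := fun n => (hc _ ⟨n, rfl⟩).le
  refine ⟨c, (hab 0).le.trans (hac 0), fun γ hγ => ?_⟩
  rw [← dist_le_zero]
  refine le_of_forall_pos_le_add fun ε hε => ?_
  obtain ⟨n, hn⟩ := exists_nat_one_div_lt (half_pos hε)
  linarith [dist_triangle_right (f γ) (f c) (f (a n)), ha n γ ((hac n).trans hγ), ha n c (hac n)]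

end OmegaOneLike

theorem exists_isGLB_prodLex {α β : Type*} [LinearOrder α] [WellFoundedLT α] [Preorder β]
    (hβ : ∀ s : Set β, s.Nonempty → ∃ b, IsGLB s b) {s : Set (α ×ₗ β)} (hs : s.Nonempty) :
    ∃ a, IsGLB s a := by
  obtain ⟨a, ⟨x, hx, rfl⟩, hmin⟩ :=
    wellFounded_lt.has_min ((fun x => (ofLex x).1) '' s) (hs.image _)
  have hle : ∀ y ∈ s, (ofLex x).1 ≤ (ofLex y).1 := fun y hy => not_lt.1 (hmin _ ⟨y, hy, rfl⟩)
  obtain ⟨b, hb⟩ := hβ {b | toLex ((ofLex x).1, b) ∈ s} ⟨(ofLex x).2, hx⟩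
  refine ⟨toLex ((ofLex x).1, b), fun y hy => Prod.Lex.le_iff.2 ?_,
    fun w hw => Prod.Lex.le_iff.2 ?_⟩
  · rcases (hle y hy).lt_or_eq with hlt | heq
    · exact Or.inl hlt
    · exact Or.inr ⟨heq, hb.1 (by rw [mem_ofPred_eq, heq]; exact hy)⟩
  · rcases Prod.Lex.le_iff.1 (hw hx) with hlt | ⟨heq, -⟩
    · exact Or.inl hlt
    · refine Or.inr ⟨heq, hb.2 fun c hc => ?_⟩
      rcases Prod.Lex.le_iff.1 (hw hc) with hlt | ⟨-, hwc⟩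
      · exact absurd heq hlt.ne
      · exact hwc

theorem exists_isLUB_of_exists_isGLB {α : Type*} [Preorder α]
    (h : ∀ s : Set α, s.Nonempty → BddBelow s → ∃ a, IsGLB s a) {s : Set α} (hne : s.Nonempty)
    (hbdd : BddAbove s) : ∃ a, IsLUB s a :=
  (h _ hbdd hne.bddBelow_upperBounds).imp fun _ => isGLB_upperBounds.1

open scoped Classical in
/-- A conditionally complete linear order structure on a linear order in which all bounded below
nonempty sets have infima. -/
abbrev conditionallyCompleteLinearOrderOfExistsIsGLB (α : Type*) [i : LinearOrder α] [Nonempty α]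
    (h : ∀ s : Set α, s.Nonempty → BddBelow s → ∃ a, IsGLB s a) :
    ConditionallyCompleteLinearOrder α where
  __ := i
  __ := LinearOrder.toLattice
  sSup s := if hs : s.Nonempty ∧ BddAbove s
    then (exists_isLUB_of_exists_isGLB h hs.1 hs.2).choose else Classical.arbitrary α
  sInf s := if hs : s.Nonempty ∧ BddBelow s then (h s hs.1 hs.2).choose
    else Classical.arbitrary α
  isLUB_csSup s hne hbdd := by
    rw [dif_pos ⟨hne, hbdd⟩]
    exact (exists_isLUB_of_exists_isGLB h hne hbdd).choose_spec
  isGLB_csInf s hne hbdd := by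
    rw [dif_pos ⟨hne, hbdd⟩]
    exact (h s hne hbdd).choose_spec
  csSup_of_not_bddAbove s hs := by simp [hs]
  csInf_of_not_bddBelow s hs := by simp [hs]

theorem countableInterFilter_atTop_of_bddAbove {α : Type*} [Preorder α] [IsDirectedOrder α]
    [Nonempty α] (h : ∀ s : Set α, s.Countable → BddAbove s) :
    CountableInterFilter (atTop : Filter α) := by
  refine ⟨fun S hS hmem => ?_⟩
  choose! a ha using fun s hs => mem_atTop_sets.1 (hmem s hs)
  obtain ⟨b, hb⟩ := h (a '' S) (hS.image a)
  exact mem_atTop_sets.2 ⟨b, fun x hx s hs => ha s hs x ((hb ⟨s, hs, rfl⟩).trans hx)⟩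

instance : WellFoundedLT Omega1 :=
  inferInstanceAs (WellFoundedLT {o : Ordinal.{0} // o < (Cardinal.aleph 1).ord})

instance : NoMaxOrder Omega1 :=
  ⟨fun a => ⟨⟨Order.succ a.1, (Cardinal.isSuccLimit_ord (Cardinal.aleph0_le_aleph 1)).succ_lt a.2⟩,
    Order.lt_succ a.1⟩⟩

theorem Omega1.bddAbove_of_countable {s : Set Omega1} (hs : s.Countable) : BddAbove s := by
  have : Countable s := hs.to_subtype
  have hsup : ⨆ a : s, a.1.toOrdinal < Ordinal.omega 1 :=
    Ordinal.iSup_lt_omega_one fun a => a.1.2.trans_eq (Cardinal.ord_aleph 1)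
  exact ⟨⟨_, hsup.trans_eq (Cardinal.ord_aleph 1).symm⟩, fun a ha =>
    Ordinal.le_iSup (fun a : s => a.1.toOrdinal) ⟨a, ha⟩⟩

/-- The point of the closed long ray indexed by the ordinal `o` and the real number `0`. -/
def ClosedLongRay.ofOmega1 (o : Omega1) : ClosedLongRay := toLex (o, ⟨0, by simp⟩)

theorem ClosedLongRay.ofOmega1_strictMono : StrictMono ClosedLongRay.ofOmega1 :=
  fun _ _ h => Prod.Lex.lt_iff.2 (Or.inl h)

theorem ClosedLongRay.lt_ofOmega1 {x : ClosedLongRay} {o : Omega1} (h : (ofLex x).1 < o) :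
    x < ofOmega1 o :=
  Prod.Lex.lt_iff.2 (Or.inl h)

instance : DenselyOrdered ClosedLongRay :=
  inferInstanceAs (DenselyOrdered (Omega1 ×ₗ Ico (0 : ℝ) 1))

theorem ClosedLongRay.exists_isGLB {s : Set ClosedLongRay} (hs : s.Nonempty) : ∃ a, IsGLB s a :=
  have : Inhabited (Ico (0 : ℝ) 1) := ⟨⟨0, by simp⟩⟩
  exists_isGLB_prodLex (fun _ ht => ⟨_, isGLB_csInf ht ⟨⟨0, by simp⟩, fun x _ => x.2.1⟩⟩) hs

theorem LongRay.bddAbove_of_countable {s : Set LongRay} (hs : s.Countable) : BddAbove s := by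
  obtain ⟨o, ho⟩ := Omega1.bddAbove_of_countable (hs.image fun x => (ofLex x.toCLR).1)
  obtain ⟨o', hoo'⟩ := exists_gt o
  exact ⟨⟨.ofOmega1 o', _, ClosedLongRay.ofOmega1_strictMono hoo'⟩, fun x hx =>
    (ClosedLongRay.lt_ofOmega1 ((ho ⟨x, hx, rfl⟩).trans_lt hoo')).le⟩

theorem LongRay.exists_isGLB {s : Set LongRay} (hs : s.Nonempty) (hbdd : BddBelow s) :
    ∃ a, IsGLB s a := by
  obtain ⟨a, ha⟩ := ClosedLongRay.exists_isGLB (hs.image LongRay.toCLR)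
  obtain ⟨b, hb⟩ := hbdd
  obtain ⟨c, hc⟩ := b.2
  have hba : b.toCLR ≤ a := ha.2 (forall_mem_image.2 fun y hy => hb hy)
  exact ⟨⟨a, c, hc.trans_le hba⟩, fun y hy => ha.1 ⟨y, hy, rfl⟩,
    fun w hw => ha.2 (forall_mem_image.2 fun y hy => hw hy)⟩

instance : Nonempty LongRay := (LongRay.bddAbove_of_countable countable_empty).nonempty

/-- The long ray is conditionally complete. This is not an instance, since then the order of the
long ray could be found along two different paths. -/
abbrev LongRay.conditionallyCompleteLinearOrder : ConditionallyCompleteLinearOrder LongRay :=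
  conditionallyCompleteLinearOrderOfExistsIsGLB LongRay fun _ => LongRay.exists_isGLB

instance : OrdConnected {x : ClosedLongRay | ∃ y, y < x} :=
  ⟨fun _ ⟨y, hy⟩ _ _ _ hx => ⟨y, hy.trans_le hx.1⟩⟩

instance : OrderTopology LongRay :=
  inferInstanceAs (OrderTopology {x : ClosedLongRay | ∃ y, y < x})

instance : DenselyOrdered LongRay :=
  inferInstanceAs (DenselyOrdered {x : ClosedLongRay | ∃ y, y < x})

instance : NoMinOrder LongRay := ⟨fun x => by
  obtain ⟨y, hy⟩ := x.2
  obtain ⟨z, hyz, hzx⟩ := exists_between hy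
  exact ⟨⟨z, y, hyz⟩, hzx⟩⟩

instance : NoMaxOrder LongRay := ⟨fun x => by
  obtain ⟨o, ho⟩ := exists_gt (ofLex x.toCLR).1
  have hlt : x.toCLR < .ofOmega1 o := ClosedLongRay.lt_ofOmega1 ho
  exact ⟨⟨.ofOmega1 o, _, hlt⟩, hlt⟩⟩

instance : CountableInterFilter (atTop : Filter LongRay) :=
  countableInterFilter_atTop_of_bddAbove fun _ => LongRay.bddAbove_of_countable

/-! ### Coordinates along and across the leaves -/

namespace Foliation

section TransverseCoordinate

variable {M : Type u} [TopologicalSpace M] {p q : ℕ} (F : Foliation M p q) {i j : F.ι} {x y : M}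

open scoped Classical in
/-- The transverse coordinate of the chart `i`, extended by the junk value `0` off its domain. -/
def transCoord (i : F.ι) (x : M) : Fin q → ℝ :=
  if h : x ∈ F.U i then (F.chart i ⟨x, h⟩).2 else 0

theorem transCoord_of_mem (h : x ∈ F.U i) : F.transCoord i x = (F.chart i ⟨x, h⟩).2 := dif_pos h

theorem continuousOn_transCoord (i : F.ι) : ContinuousOn (F.transCoord i) (F.U i) := by
  rw [continuousOn_iff_continuous_domRestrict]
  exact (continuous_snd.comp (F.chart i).continuous).congr fun x => (F.transCoord_of_mem x.2).symm

theorem continuousAt_transCoord (h : x ∈ F.U i) : ContinuousAt (F.transCoord i) x :=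
  (F.continuousOn_transCoord i).continuousAt ((F.isOpen i).mem_nhds h)

theorem transCoord_eq_of_transCoord_eq (hxi : x ∈ F.U i) (hxj : x ∈ F.U j) (hyi : y ∈ F.U i)
    (hyj : y ∈ F.U j) (h : F.transCoord i x = F.transCoord i y) :
    F.transCoord j x = F.transCoord j y := by
  rw [F.transCoord_of_mem hxi, F.transCoord_of_mem hyi] at h
  rw [F.transCoord_of_mem hxj, F.transCoord_of_mem hyj]
  exact F.compat i j x y hxi hxj hyi hyj h

theorem isPreconnected_plaqueFibre (i : F.ι) (y : Fin q → ℝ) :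
    IsPreconnected (F.plaqueFibre i y) := by
  have hrange : F.plaqueFibre i y = range fun t => ((F.chart i).symm (t, y)).1 := by
    ext w
    refine ⟨fun ⟨hw, hwy⟩ => ⟨(F.chart i ⟨w, hw⟩).1, ?_⟩, ?_⟩
    · simp only [← hwy, Prod.mk.eta, Homeomorph.symm_apply_apply]
    · rintro ⟨t, rfl⟩
      exact ⟨Subtype.coe_prop _, by rw [Subtype.coe_eta, Homeomorph.apply_symm_apply]⟩
  rw [hrange]
  exact isPreconnected_range (continuous_subtype_val.comp
    ((F.chart i).symm.continuous.comp (by fun_prop)))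

theorem samePlaque_iff_exists :
    F.samePlaque x y ↔ ∃ i, x ∈ F.U i ∧ y ∈ F.U i ∧ F.transCoord i x = F.transCoord i y := by
  constructor
  · rintro ⟨_, ⟨i, v, z, -, rfl⟩, hx, hy⟩
    obtain ⟨hxi, hxv⟩ := connectedComponentIn_subset _ _ hx
    obtain ⟨hyi, hyv⟩ := connectedComponentIn_subset _ _ hy
    exact ⟨i, hxi, hyi, by rw [F.transCoord_of_mem hxi, F.transCoord_of_mem hyi, hxv, hyv]⟩
  · rintro ⟨i, hx, hy, h⟩
    have hxm : x ∈ F.plaqueFibre i (F.transCoord i x) := ⟨hx, (F.transCoord_of_mem hx).symm⟩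
    have hym : y ∈ F.plaqueFibre i (F.transCoord i x) := ⟨hy, by rw [h, F.transCoord_of_mem hy]⟩
    exact ⟨_, ⟨i, _, x, hxm, rfl⟩, mem_connectedComponentIn hxm,
      (F.isPreconnected_plaqueFibre i _).subset_connectedComponentIn hxm subset_rfl hym⟩

theorem samePlaque_iff_transCoord_eq (hx : x ∈ F.U i) (hy : y ∈ F.U i) :
    F.samePlaque x y ↔ F.transCoord i x = F.transCoord i y := by
  rw [samePlaque_iff_exists]
  refine ⟨fun ⟨j, hxj, hyj, h⟩ => F.transCoord_eq_of_transCoord_eq hxj hx hyj hy h,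
    fun h => ⟨i, hx, hy, h⟩⟩

theorem samePlaque_comm : F.samePlaque x y ↔ F.samePlaque y x :=
  exists_congr fun _ => and_congr_right fun _ => and_comm

theorem saturated_of_samePlaque {A : Set M} (h : ∀ x y, F.samePlaque x y → x ∈ A → y ∈ A) :
    F.Saturated A := by
  intro x hx y hxy
  have hiff : x ∈ A ↔ y ∈ A := by
    clear hx
    induction hxy with
    | rel x y hxy => exact ⟨h x y hxy, h y x (F.samePlaque_comm.1 hxy)⟩
    | refl x => rfl
    | symm x y _ ih => exact ih.symm
    | trans x y z _ _ ih₁ ih₂ => exact ih₁.trans ih₂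
  exact hiff.1 hx

end TransverseCoordinate

section OneDimensional

variable {M : Type u} [TopologicalSpace M] {q : ℕ} (F : Foliation M 1 q) {i j : F.ι} {x y : M}

open scoped Classical in
/-- The coordinate along the leaves of the chart `i` of a one-dimensional foliation, extended by
the junk value `0` off its domain. -/
def leafCoord (i : F.ι) (x : M) : ℝ :=
  if h : x ∈ F.U i then (F.chart i ⟨x, h⟩).1 0 else 0

/-- The point with leaf coordinate `t` and transverse coordinate `y` in the chart `i`. -/
def chartPoint (i : F.ι) (t : ℝ) (y : Fin q → ℝ) : M := ((F.chart i).symm (fun _ => t, y)).1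

theorem leafCoord_of_mem (h : x ∈ F.U i) : F.leafCoord i x = (F.chart i ⟨x, h⟩).1 0 := dif_pos h

theorem chartPoint_mem (i : F.ι) (t : ℝ) (y : Fin q → ℝ) : F.chartPoint i t y ∈ F.U i :=
  Subtype.coe_prop _

@[simp]
theorem leafCoord_chartPoint (i : F.ι) (t : ℝ) (y : Fin q → ℝ) :
    F.leafCoord i (F.chartPoint i t y) = t := by
  rw [F.leafCoord_of_mem (F.chartPoint_mem i t y)]
  simp [chartPoint]

@[simp]
theorem transCoord_chartPoint (i : F.ι) (t : ℝ) (y : Fin q → ℝ) :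
    F.transCoord i (F.chartPoint i t y) = y := by
  rw [F.transCoord_of_mem (F.chartPoint_mem i t y)]
  simp [chartPoint]

theorem chartPoint_leafCoord_transCoord (h : x ∈ F.U i) :
    F.chartPoint i (F.leafCoord i x) (F.transCoord i x) = x := by
  have hchart : (fun _ => F.leafCoord i x, F.transCoord i x) = F.chart i ⟨x, h⟩ := by
    rw [F.leafCoord_of_mem h, F.transCoord_of_mem h]
    exact Prod.ext (funext fun k => by rw [Subsingleton.elim k 0]) rfl
  rw [chartPoint, hchart, Homeomorph.symm_apply_apply]

theorem eq_of_leafCoord_eq_of_transCoord_eq (hx : x ∈ F.U i) (hy : y ∈ F.U i)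
    (hl : F.leafCoord i x = F.leafCoord i y) (ht : F.transCoord i x = F.transCoord i y) :
    x = y := by
  rw [← F.chartPoint_leafCoord_transCoord hx, hl, ht, F.chartPoint_leafCoord_transCoord hy]

theorem continuous_chartPoint (i : F.ι) :
    Continuous fun p : ℝ × (Fin q → ℝ) => F.chartPoint i p.1 p.2 :=
  continuous_subtype_val.comp ((F.chart i).symm.continuous.comp (by fun_prop))

theorem continuous_chartPoint_left (i : F.ι) (y : Fin q → ℝ) :
    Continuous fun t => F.chartPoint i t y :=
  (F.continuous_chartPoint i).comp (f := fun t => (t, y)) (by fun_prop)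

theorem isSeparable_U (i : F.ι) : TopologicalSpace.IsSeparable (F.U i) := by
  refine (TopologicalSpace.isSeparable_range (F.continuous_chartPoint i)).mono fun x hx => ?_
  exact ⟨(F.leafCoord i x, F.transCoord i x), F.chartPoint_leafCoord_transCoord hx⟩

theorem continuousOn_leafCoord (i : F.ι) : ContinuousOn (F.leafCoord i) (F.U i) := by
  rw [continuousOn_iff_continuous_domRestrict]
  exact ((continuous_apply 0).comp (continuous_fst.comp (F.chart i).continuous)).congr
    fun x => (F.leafCoord_of_mem x.2).symm

theorem continuousAt_leafCoord (h : x ∈ F.U i) : ContinuousAt (F.leafCoord i) x :=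
  (F.continuousOn_leafCoord i).continuousAt ((F.isOpen i).mem_nhds h)

theorem tendsto_transCoord_of_samePlaque {X : Type*} {l : Filter X} {u w : X → M} {u₀ w₀ : M}
    (hu : Tendsto u l (𝓝 u₀)) (hu₀ : u₀ ∈ F.U i) (hw₀i : w₀ ∈ F.U i) (hw₀j : w₀ ∈ F.U j)
    (h₀ : F.samePlaque w₀ u₀)
    (hw : ∀ᶠ n in l, w n ∈ F.U i ∧ w n ∈ F.U j ∧ F.samePlaque (w n) (u n)) :
    Tendsto (fun n => F.transCoord j (w n)) l (𝓝 (F.transCoord j w₀)) := by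
  let v : X → M := fun n => F.chartPoint i (F.leafCoord i w₀) (F.transCoord i (u n))
  have hv : Tendsto v l (𝓝 w₀) := by
    have hlim := ((F.continuous_chartPoint i).tendsto (F.leafCoord i w₀, F.transCoord i u₀)).comp
      (tendsto_const_nhds.prodMk_nhds ((F.continuousAt_transCoord hu₀).tendsto.comp hu))
    rwa [← (F.samePlaque_iff_transCoord_eq hw₀i hu₀).1 h₀,
      F.chartPoint_leafCoord_transCoord hw₀i] at hlim
  have hvj : ∀ᶠ n in l, v n ∈ F.U j := hv.eventually ((F.isOpen j).mem_nhds hw₀j)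
  refine ((F.continuousAt_transCoord hw₀j).tendsto.comp hv).congr' ?_
  filter_upwards [hvj, hw, hu.eventually ((F.isOpen i).mem_nhds hu₀)] with n hvn ⟨hni, hnj, hn⟩ hun
  refine F.transCoord_eq_of_transCoord_eq (F.chartPoint_mem _ _ _) hvn hni hnj ?_
  rw [transCoord_chartPoint, (F.samePlaque_iff_transCoord_eq hni hun).1 hn]

end OneDimensional

end Foliation

/-! ### Tubes and vertical rays -/

namespace Foliation

universe v w

variable {S : Type v} [TopologicalSpace S] {Λ : Type w} [TopologicalSpace Λ]

section Tube

variable {p q : ℕ}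

/-- `V × (β, →)` is a tube if all its bounded pieces `V × (β, γ]` lie in single charts. -/
def IsTube [LinearOrder Λ] (F : Foliation (S × Λ) p q) (V : Set S) (β : Λ) : Prop :=
  ∀ γ, ∃ i, V ×ˢ Ioc β γ ⊆ F.U i

theorem IsTube.mono_left [LinearOrder Λ] {F : Foliation (S × Λ) p q} {V V' : Set S} {β : Λ}
    (h : F.IsTube V β) (hV : V' ⊆ V) : F.IsTube V' β := fun γ => by
  obtain ⟨i, hi⟩ := h γ
  exact ⟨i, (prod_mono_left hV).trans hi⟩

theorem IsTube.mono_right [LinearOrder Λ] {F : Foliation (S × Λ) p q} {V : Set S} {β β' : Λ}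
    (h : F.IsTube V β) (hβ : β ≤ β') : F.IsTube V β' := fun γ => by
  obtain ⟨i, hi⟩ := h γ
  exact ⟨i, (prod_mono_right (Ioc_subset_Ioc_left hβ)).trans hi⟩

variable [ConditionallyCompleteLinearOrder Λ] [OrderTopology Λ] [NoMaxOrder Λ] [NoMinOrder Λ]
  [Nonempty Λ] [CountableInterFilter (atTop : Filter Λ)] [FirstCountableTopology S]
  (F : Foliation (S × Λ) p q)

theorem exists_mem_nhds_isTube (z : S) : ∃ β, ∃ V ∈ 𝓝 z, F.IsTube V β := by
  have hchart : ∀ γ : Λ, ∃ β < γ, ∃ V ∈ 𝓝 z, ∃ i, V ×ˢ Ioc β γ ⊆ F.U i := fun γ => by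
    obtain ⟨i, hi⟩ := F.covers (z, γ)
    obtain ⟨V, hV, J, hJ, hVJ⟩ := mem_nhds_prod_iff.1 ((F.isOpen i).mem_nhds hi)
    obtain ⟨β, hβ, hβJ⟩ := exists_Ioc_subset_of_mem_nhds hJ (exists_lt γ)
    exact ⟨β, hβ, V, hV, i, (prod_mono_right hβJ).trans hVJ⟩
  obtain ⟨β, hβ⟩ := exists_forall_of_forall_exists_lt
    (P := fun β γ => ∃ V ∈ 𝓝 z, ∃ i, V ×ˢ Ioc β γ ⊆ F.U i)
    (fun γ β β' hle ⟨V, hV, i, hi⟩ =>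
      ⟨V, hV, i, (prod_mono_right (Ioc_subset_Ioc_left hle)).trans hi⟩)
    (fun β γ γ' hle ⟨V, hV, i, hi⟩ =>
      ⟨V, hV, i, (prod_mono_right (Ioc_subset_Ioc_right hle)).trans hi⟩) hchart
  obtain ⟨V, hV⟩ := (𝓝 z).exists_antitone_basis
  obtain ⟨n, -, hn⟩ := exists_mem_forall_of_antitone
    (P := fun n γ => ∃ i, V n ×ˢ Ioc β γ ⊆ F.U i) countable_univ
    (fun n γ γ' hle ⟨i, hi⟩ => ⟨i, (prod_mono_right (Ioc_subset_Ioc_right hle)).trans hi⟩)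
    fun γ => by
      obtain ⟨W, hW, i, hi⟩ := hβ γ
      obtain ⟨n, hn⟩ := hV.mem_iff.1 hW
      exact ⟨n, mem_univ n, i, (prod_mono_left hn).trans hi⟩
  exact ⟨β, V n, hV.mem n, hn⟩

theorem exists_forall_exists_mem_nhds_isTube [CompactSpace S] :
    ∃ β, ∀ z : S, ∃ V ∈ 𝓝 z, F.IsTube V β := by
  suffices h : ∃ β, ∀ z ∈ (univ : Set S), ∃ V ∈ 𝓝 z, F.IsTube V β by simpa using h
  refine isCompact_univ.induction_on (p := fun s => ∃ β, ∀ z ∈ s, ∃ V ∈ 𝓝 z, F.IsTube V β)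
    ⟨Classical.arbitrary Λ, by simp⟩ (fun s t hst ⟨β, h⟩ => ⟨β, fun z hz => h z (hst hz)⟩) ?_ ?_
  · rintro s t ⟨β₁, h₁⟩ ⟨β₂, h₂⟩
    refine ⟨max β₁ β₂, fun z hz => ?_⟩
    rcases hz with hz | hz
    · obtain ⟨V, hV, hVβ⟩ := h₁ z hz
      exact ⟨V, hV, hVβ.mono_right (le_max_left _ _)⟩
    · obtain ⟨V, hV, hVβ⟩ := h₂ z hz
      exact ⟨V, hV, hVβ.mono_right (le_max_right _ _)⟩
  · intro z _
    obtain ⟨β, V, hV, hVβ⟩ := F.exists_mem_nhds_isTube z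
    exact ⟨interior V, mem_nhdsWithin_of_mem_nhds (interior_mem_nhds.2 hV), β,
      fun z' hz' => ⟨V, mem_interior_iff_mem_nhds.1 hz', hVβ⟩⟩

end Tube

section Vertical

variable {q : ℕ}

/-- The foliation is vertical over `z` above the height `a`: all the points of `{z} × (a, →)`
pairwise lie in common plaques. -/
def IsVerticalAbove [LinearOrder Λ] {p : ℕ} (F : Foliation (S × Λ) p q) (z : S) (a : Λ) : Prop :=
  ∀ γ γ', a < γ → a < γ' → F.samePlaque (z, γ) (z, γ')

section Order

variable [LinearOrder Λ] {p : ℕ} {F : Foliation (S × Λ) p q} {z : S} {a b : Λ}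

theorem IsVerticalAbove.mono (h : F.IsVerticalAbove z a) (hab : a ≤ b) : F.IsVerticalAbove z b :=
  fun γ γ' hγ hγ' => h γ γ' (hab.trans_lt hγ) (hab.trans_lt hγ')

theorem isClosed_setOf_isVerticalAbove (ha : ∀ z, ∃ V ∈ 𝓝 z, F.IsTube V a) :
    IsClosed {z | F.IsVerticalAbove z a} := by
  refine isClosed_of_closure_subset fun z hz γ γ' hγ hγ' => ?_
  obtain ⟨V, hV, htube⟩ := ha z
  obtain ⟨i, hi⟩ := htube (max γ γ')
  have hmem : ∀ z' ∈ V, (z', γ) ∈ F.U i := fun z' hz' => hi ⟨hz', hγ, le_max_left _ _⟩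
  have hmem' : ∀ z' ∈ V, (z', γ') ∈ F.U i := fun z' hz' => hi ⟨hz', hγ', le_max_right _ _⟩
  have hzV := mem_of_mem_nhds hV
  rw [F.samePlaque_iff_transCoord_eq (hmem z hzV) (hmem' z hzV)]
  have htendsto : ∀ {δ}, (z, δ) ∈ F.U i →
      Tendsto (fun z' => F.transCoord i (z', δ)) (𝓝 z) (𝓝 (F.transCoord i (z, δ))) := fun hδ =>
    (F.continuousAt_transCoord hδ).tendsto.comp (Continuous.tendsto' (by fun_prop) _ _ rfl)
  refine tendsto_nhds_unique_of_frequently_eq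
    (htendsto (hmem z hzV)) (htendsto (hmem' z hzV))
    (((mem_closure_iff_frequently.1 hz).and_eventually hV).mono fun z' hz' => ?_)
  exact (F.samePlaque_iff_transCoord_eq (hmem z' hz'.2) (hmem' z' hz'.2)).1 (hz'.1 γ γ' hγ hγ')

end Order

variable [ConditionallyCompleteLinearOrder Λ] [OrderTopology Λ]
  {F : Foliation (S × Λ) 1 q} {z : S} {V : Set S} {a b c : Λ}

theorem eventually_exists_transCoord_eq [DenselyOrdered Λ] {i : F.ι} (hV : V ∈ 𝓝 z)
    (hab : a < b) (hbc : b < c) (hU : ∀ δ ∈ Icc a c, (z, δ) ∈ F.U i)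
    (hvert : ∀ δ ∈ Icc a c, F.transCoord i (z, δ) = F.transCoord i (z, b)) :
    ∀ᶠ y in 𝓝 (F.transCoord i (z, b)),
      ∃ z' ∈ V, (z', b) ∈ F.U i ∧ F.transCoord i (z', b) = y := by
  set y₀ := F.transCoord i (z, b)
  set l : Λ → ℝ := fun δ => F.leafCoord i (z, δ)
  have hac := (hab.trans hbc).le
  have hpoint : ∀ δ ∈ Icc a c, F.chartPoint i (l δ) y₀ = (z, δ) := fun δ hδ => by
    rw [← hvert δ hδ, F.chartPoint_leafCoord_transCoord (hU δ hδ)]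
  have hl : ContinuousOn l (uIcc a c) := by
    rw [uIcc_of_le hac]
    exact (F.continuousOn_leafCoord i).comp (by fun_prop) hU
  have hfst : ∀ᶠ y in 𝓝 y₀, ∀ t ∈ uIcc (l a) (l c), (F.chartPoint i t y).1 ∈ V := by
    refine isCompact_uIcc.eventually_forall_of_forall_eventually fun t ht => ?_
    obtain ⟨δ, hδ, rfl⟩ := intermediate_value_uIcc hl ht
    rw [uIcc_of_le hac] at hδ
    refine ((continuous_fst.comp ((F.continuous_chartPoint i).comp continuous_swap)).tendsto
      (y₀, l δ)).eventually_mem ?_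
    simpa only [Function.comp_apply, Prod.swap_prod_mk, hpoint δ hδ] using hV
  have hsnd : ∀ δ ∈ Icc a c, Tendsto (fun y => (F.chartPoint i (l δ) y).2) (𝓝 y₀) (𝓝 δ) := by
    intro δ hδ
    have hcont : Continuous fun y => (F.chartPoint i (l δ) y).2 :=
      continuous_snd.comp ((F.continuous_chartPoint i).comp (f := fun y => (l δ, y)) (by fun_prop))
    simpa only [hpoint δ hδ] using hcont.tendsto y₀
  filter_upwards [hfst, (hsnd a (left_mem_Icc.2 hac)).eventually_lt_const hab,
    (hsnd c (right_mem_Icc.2 hac)).eventually_const_lt hbc] with y hyV hya hyc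
  obtain ⟨t, ht, rfl⟩ := intermediate_value_uIcc (f := fun t => (F.chartPoint i t y).2)
    (continuous_snd.comp (F.continuous_chartPoint_left i y)).continuousOn
    (Icc_subset_uIcc ⟨hya.le, hyc.le⟩)
  exact ⟨_, hyV t ht, F.chartPoint_mem i t y, F.transCoord_chartPoint i t y⟩

theorem IsVerticalAbove.eventually_forall_exists_samePlaque [DenselyOrdered Λ] [NoMaxOrder Λ]
    (hV : V ∈ 𝓝 z) (htube : F.IsTube V a) (hvert : F.IsVerticalAbove z a) (hab : a < b) (γ : Λ) :
    ∀ᶠ z' in 𝓝 z, ∀ δ ∈ Icc b γ, ∃ z'' ∈ V, F.samePlaque (z'', b) (z', δ) := by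
  obtain ⟨a', haa', ha'b⟩ := exists_between hab
  obtain ⟨c, hbc⟩ := exists_gt b
  obtain ⟨i, hi⟩ := htube (max c γ)
  have hU : ∀ z' ∈ V, ∀ δ, a < δ → δ ≤ max c γ → (z', δ) ∈ F.U i :=
    fun z' hz' δ hδ hδ' => hi ⟨hz', hδ, hδ'⟩
  have hzV := mem_of_mem_nhds hV
  have hzb := hU z hzV b hab (hbc.le.trans (le_max_left _ _))
  have htrans : ∀ δ, a < δ → δ ≤ max c γ → F.transCoord i (z, δ) = F.transCoord i (z, b) :=
    fun δ hδ hδ' => (F.samePlaque_iff_transCoord_eq (hU z hzV δ hδ hδ') hzb).1 (hvert δ b hδ hab)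
  have hlift := eventually_exists_transCoord_eq (i := i) hV ha'b hbc
    (fun δ hδ => hU z hzV δ (haa'.trans_le hδ.1) (hδ.2.trans (le_max_left _ _)))
    (fun δ hδ => htrans δ (haa'.trans_le hδ.1) (hδ.2.trans (le_max_left _ _)))
  have hcompact : ∀ᶠ z' in 𝓝 z, ∀ δ ∈ Icc b γ, ∃ z'' ∈ V, (z'', b) ∈ F.U i ∧
      F.transCoord i (z'', b) = F.transCoord i (z', δ) := by
    refine isCompact_Icc.eventually_forall_of_forall_eventually fun δ hδ => ?_
    have haδ := hab.trans_le hδ.1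
    have hδγ := hδ.2.trans (le_max_right c γ)
    have htendsto := (F.continuousAt_transCoord (hU z hzV δ haδ hδγ)).tendsto
    rw [htrans δ haδ hδγ] at htendsto
    exact htendsto.eventually hlift
  filter_upwards [hcompact, hV] with z' hz' hz'V δ hδ
  obtain ⟨z'', hz'', hz''b, heq⟩ := hz' δ hδ
  have hz'δ := hU z' hz'V δ (hab.trans_le hδ.1) (hδ.2.trans (le_max_right _ _))
  exact ⟨z'', hz'', (F.samePlaque_iff_transCoord_eq hz''b hz'δ).2 heq⟩

variable [NoMaxOrder Λ] [CountableInterFilter (atTop : Filter Λ)]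

theorem exists_isVerticalAbove_of_forall_samePlaque (htube : F.IsTube V a) (hab : a < b)
    (hz : z ∈ V) (h : ∀ δ ≥ b, ∃ z' ∈ V, F.samePlaque (z', b) (z, δ)) :
    ∃ c, F.IsVerticalAbove z c := by
  have : Nonempty S := ⟨z⟩
  choose! f hfV hf using h
  have hfU : ∀ {i γ}, V ×ˢ Ioc a γ ⊆ F.U i → b ≤ γ → ∀ δ ≥ b, (f δ, b) ∈ F.U i :=
    fun hi hγ δ hδ => hi ⟨hfV δ hδ, hab, hγ⟩
  obtain ⟨i₀, hi₀⟩ := htube b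
  obtain ⟨c, hbc, hc⟩ := exists_forall_eq_of_continuousWithinAt_Iio (b := b)
    (f := fun δ => F.transCoord i₀ (f δ, b)) fun γ hγ => by
      obtain ⟨i, hi⟩ := htube γ
      refine F.tendsto_transCoord_of_samePlaque (i := i) (u := fun δ => (z, δ)) (u₀ := (z, γ))
        (Continuous.tendsto' (by fun_prop) _ _ rfl |>.mono_left nhdsWithin_le_nhds)
        (hi ⟨hz, hab.trans hγ, le_rfl⟩) (hfU hi hγ.le γ hγ.le) (hfU hi₀ le_rfl γ hγ.le)
        (hf γ hγ.le) ?_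
      filter_upwards [Ioo_mem_nhdsLT hγ] with δ hδ
      exact ⟨hfU hi hγ.le δ hδ.1.le, hfU hi₀ le_rfl δ hδ.1.le, hf δ hδ.1.le⟩
  refine ⟨c, fun γ γ' hγ hγ' => ?_⟩
  obtain ⟨i, hi⟩ := htube (max γ γ')
  have hbγ := hbc.trans hγ.le
  have hbγ' := hbc.trans hγ'.le
  have hγi : (z, γ) ∈ F.U i := hi ⟨hz, hab.trans_le hbγ, le_max_left _ _⟩
  have hγ'i : (z, γ') ∈ F.U i := hi ⟨hz, hab.trans_le hbγ', le_max_right _ _⟩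
  have hfγ := hfU hi (hbγ.trans (le_max_left _ _)) γ hbγ
  have hfγ' := hfU hi (hbγ.trans (le_max_left _ _)) γ' hbγ'
  rw [F.samePlaque_iff_transCoord_eq hγi hγ'i,
    ← (F.samePlaque_iff_transCoord_eq hfγ hγi).1 (hf γ hbγ),
    ← (F.samePlaque_iff_transCoord_eq hfγ' hγ'i).1 (hf γ' hbγ')]
  exact F.transCoord_eq_of_transCoord_eq (hfU hi₀ le_rfl γ hbγ) hfγ (hfU hi₀ le_rfl γ' hbγ') hfγ'
    ((hc γ hγ.le).trans (hc γ' hγ'.le).symm)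

theorem IsVerticalAbove.eventually_exists [DenselyOrdered Λ] [FirstCountableTopology S]
    (hV : V ∈ 𝓝 z) (htube : F.IsTube V a) (hvert : F.IsVerticalAbove z a) :
    ∀ᶠ z' in 𝓝 z, ∃ c, F.IsVerticalAbove z' c := by
  have : Nonempty Λ := ⟨a⟩
  obtain ⟨b, hab⟩ := exists_gt a
  have hev : ∀ᶠ z' in 𝓝 z, ∀ γ, ∀ δ ∈ Icc b γ, ∃ z'' ∈ V, F.samePlaque (z'', b) (z', δ) :=
    eventually_forall_of_antitone (fun _ γ γ' hle h δ hδ => h δ ⟨hδ.1, hδ.2.trans hle⟩)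
      (hvert.eventually_forall_exists_samePlaque hV htube hab)
  filter_upwards [hev, hV] with z' hz' hz'V
  exact exists_isVerticalAbove_of_forall_samePlaque htube hab hz'V
    fun δ hδ => hz' δ δ ⟨hδ, le_rfl⟩

variable [DenselyOrdered Λ] [NoMinOrder Λ] [CompactSpace S] [SecondCountableTopology S]
  [PreconnectedSpace S]

theorem IsVerticalAbove.exists_forall (hvert : F.IsVerticalAbove z a) :
    ∃ c, ∀ z, F.IsVerticalAbove z c := by
  have : Nonempty Λ := ⟨a⟩
  obtain ⟨β, hβ⟩ := F.exists_forall_exists_mem_nhds_isTube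
  let Z : Set S := {z | ∃ a, F.IsVerticalAbove z a}
  have hopen : IsOpen Z := isOpen_iff_mem_nhds.2 fun z ⟨a, ha⟩ => by
    obtain ⟨V, hV, htube⟩ := hβ z
    exact (ha.mono (le_max_left a β)).eventually_exists hV (htube.mono_right (le_max_right a β))
  choose f hf using fun z : Z => z.2
  obtain ⟨D, hDcount, hD⟩ := TopologicalSpace.exists_countable_dense Z
  obtain ⟨c, hc⟩ := exists_forall_lt_of_countable ((hDcount.image f).insert β)
  have hclosed : IsClosed {z | F.IsVerticalAbove z c} :=
    isClosed_setOf_isVerticalAbove fun z => (hβ z).imp fun V hV =>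
      ⟨hV.1, hV.2.mono_right (hc β (mem_insert _ _)).le⟩
  have hZ : Z = {z | F.IsVerticalAbove z c} := by
    refine Subset.antisymm (fun z hz => ?_) fun z hz => ⟨c, hz⟩
    refine closure_minimal (fun z hz => ?_) (hclosed.preimage continuous_subtype_val) (hD ⟨z, hz⟩)
    exact (hf z).mono (hc _ (mem_insert_of_mem _ ⟨z, hz, rfl⟩)).le
  have huniv : Z = univ :=
    IsClopen.eq_univ ⟨hZ ▸ hclosed, hopen⟩ ⟨z, a, hvert⟩
  exact ⟨c, fun z => hZ.subset (huniv.symm.subset (mem_univ z))⟩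

end Vertical

end Foliation

/-! ### Leaf arcs -/

namespace Foliation

section LeafArc

variable {M : Type u} [TopologicalSpace M] {q : ℕ} (F : Foliation M 1 q) {i j : F.ι}
  {x x' e e' w : M} {A A' : Set M}

/-- The segment between `x` and `x'` of the fibre of the transverse coordinate of the chart `i`
through `x`. It is meant for points `x` and `x'` with equal transverse coordinates. -/
def leafSegment (i : F.ι) (x x' : M) : Set M :=
  {w | w ∈ F.U i ∧ F.transCoord i w = F.transCoord i x ∧
    F.leafCoord i w ∈ uIcc (F.leafCoord i x) (F.leafCoord i x')}

/-- `A` is an arc from `x` to `x'` inside a plaque. -/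
def IsLeafArc (A : Set M) (x x' : M) : Prop :=
  ∃ i, x ∈ F.U i ∧ x' ∈ F.U i ∧ F.transCoord i x' = F.transCoord i x ∧ A = F.leafSegment i x x'

theorem leafSegment_eq_image (i : F.ι) (x x' : M) : F.leafSegment i x x' =
    (F.chartPoint i · (F.transCoord i x)) '' uIcc (F.leafCoord i x) (F.leafCoord i x') := by
  ext w
  constructor
  · rintro ⟨hw, htrans, hleaf⟩
    exact ⟨_, hleaf, by simp only [← htrans, F.chartPoint_leafCoord_transCoord hw]⟩
  · rintro ⟨t, ht, rfl⟩
    exact ⟨F.chartPoint_mem _ _ _, F.transCoord_chartPoint _ _ _, by simpa using ht⟩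

theorem leafSegment_comm (h : F.transCoord i x' = F.transCoord i x) :
    F.leafSegment i x x' = F.leafSegment i x' x := by
  simp only [leafSegment, h, uIcc_comm]

theorem isLeafArc_leafSegment_chartPoint (i : F.ι) (y : Fin q → ℝ) (s t : ℝ) :
    F.IsLeafArc ((F.chartPoint i · y) '' uIcc s t) (F.chartPoint i s y) (F.chartPoint i t y) :=
  ⟨i, F.chartPoint_mem _ _ _, F.chartPoint_mem _ _ _, by simp,
    by simp [leafSegment_eq_image]⟩

variable {F}

theorem IsLeafArc.left_mem (h : F.IsLeafArc A x x') : x ∈ A := by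
  obtain ⟨i, hx, -, -, rfl⟩ := h
  exact ⟨hx, rfl, left_mem_uIcc⟩

theorem IsLeafArc.right_mem (h : F.IsLeafArc A x x') : x' ∈ A := by
  obtain ⟨i, -, hx', htrans, rfl⟩ := h
  exact ⟨hx', htrans, right_mem_uIcc⟩

theorem IsLeafArc.symm (h : F.IsLeafArc A x x') : F.IsLeafArc A x' x := by
  obtain ⟨i, hx, hx', htrans, rfl⟩ := h
  exact ⟨i, hx', hx, htrans.symm, F.leafSegment_comm htrans⟩

theorem IsLeafArc.isCompact (h : F.IsLeafArc A x x') : IsCompact A := by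
  obtain ⟨i, -, -, -, rfl⟩ := h
  rw [leafSegment_eq_image]
  exact isCompact_uIcc.image (F.continuous_chartPoint_left i _)

theorem IsLeafArc.isPreconnected (h : F.IsLeafArc A x x') : IsPreconnected A := by
  obtain ⟨i, -, -, -, rfl⟩ := h
  rw [leafSegment_eq_image]
  exact isPreconnected_uIcc.image _ (F.continuous_chartPoint_left i _).continuousOn

theorem leafSegment_subset_of_isPreconnected (hA : IsPreconnected A) (hAU : A ⊆ F.U i)
    (htrans : ∀ w ∈ A, F.transCoord i w = F.transCoord i x) (hx : x ∈ A) (hx' : x' ∈ A) :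
    F.leafSegment i x x' ⊆ A := by
  rintro w ⟨hwU, hw, hleaf⟩
  have himage := (hA.image _ ((F.continuousOn_leafCoord i).mono hAU)).ordConnected.uIcc_subset
    (mem_image_of_mem _ hx) (mem_image_of_mem _ hx')
  obtain ⟨v, hv, hvw⟩ := himage hleaf
  rwa [← F.eq_of_leafCoord_eq_of_transCoord_eq (hAU hv) hwU hvw ((htrans v hv).trans hw.symm)]

theorem IsLeafArc.transCoord_eq (h : F.IsLeafArc A x x') (hA : A ⊆ F.U j) (hw : w ∈ A) :
    F.transCoord j w = F.transCoord j x := by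
  have hx := hA h.left_mem
  obtain ⟨i, hxi, -, -, rfl⟩ := h
  exact F.transCoord_eq_of_transCoord_eq hw.1 (hA hw) hxi hx hw.2.1

theorem IsLeafArc.eq_leafSegment (h : F.IsLeafArc A x x') (hA : A ⊆ F.U j) :
    A = F.leafSegment j x x' := by
  have hsub : F.leafSegment j x x' ⊆ A := leafSegment_subset_of_isPreconnected h.isPreconnected hA
    (fun _ => h.transCoord_eq hA) h.left_mem h.right_mem
  have harc : F.IsLeafArc (F.leafSegment j x x') x x' :=
    ⟨j, hA h.left_mem, hA h.right_mem, h.transCoord_eq hA h.right_mem, rfl⟩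
  obtain ⟨i, -, -, -, rfl⟩ := h
  have hsubU : F.leafSegment j x x' ⊆ F.U i := hsub.trans fun w hw => hw.1
  exact (leafSegment_subset_of_isPreconnected harc.isPreconnected hsubU
    (fun _ => harc.transCoord_eq hsubU) harc.left_mem harc.right_mem).antisymm hsub

theorem IsLeafArc.leafCoord_lt_iff (h : F.IsLeafArc A x e) (hA : A ⊆ F.U i) (hw : w ∈ A)
    (hne : w ≠ x) :
    F.leafCoord i x < F.leafCoord i w ↔ F.leafCoord i x < F.leafCoord i e := by
  have hleaf : F.leafCoord i w ≠ F.leafCoord i x := fun heq =>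
    hne (F.eq_of_leafCoord_eq_of_transCoord_eq (hA hw) (hA h.left_mem) heq (h.transCoord_eq hA hw))
  rw [h.eq_leafSegment hA] at hw
  rcases mem_uIcc.1 hw.2.2 with h | h
  · exact ⟨fun hlt => hlt.trans_le h.2, fun _ => h.1.lt_of_ne' hleaf⟩
  · exact ⟨fun hlt => absurd h.2 hlt.not_ge, fun hlt => absurd (h.1.trans h.2) hlt.not_ge⟩

theorem IsLeafArc.mem_or_mem (h : F.IsLeafArc A x e) (h' : F.IsLeafArc A' x e')
    (hA : A ⊆ F.U i) (hA' : A' ⊆ F.U i)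
    (hside : F.leafCoord i x < F.leafCoord i e ↔ F.leafCoord i x < F.leafCoord i e') :
    e ∈ A' ∨ e' ∈ A := by
  have hmem : e ∈ A' ↔ F.leafCoord i e ∈ uIcc (F.leafCoord i x) (F.leafCoord i e') := by
    rw [h'.eq_leafSegment hA']
    exact ⟨fun he => he.2.2, fun he => ⟨hA h.right_mem, h.transCoord_eq hA h.right_mem, he⟩⟩
  have hmem' : e' ∈ A ↔ F.leafCoord i e' ∈ uIcc (F.leafCoord i x) (F.leafCoord i e) := by
    rw [h.eq_leafSegment hA]
    exact ⟨fun he => he.2.2, fun he => ⟨hA' h'.right_mem, h'.transCoord_eq hA' h'.right_mem, he⟩⟩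
  rw [hmem, hmem', mem_uIcc, mem_uIcc]
  grind

theorem IsLeafArc.exists_first_mem (h : F.IsLeafArc A x x') {K : Set M} (hK : IsClosed K)
    (hx' : x' ∈ K) : ∃ e ∈ A ∩ K, ∃ B ⊆ A, F.IsLeafArc B x e ∧ ∀ w ∈ B, w ∈ K → w = e := by
  have hcompact := h.isCompact.inter_right hK
  have hnonempty : (A ∩ K).Nonempty := ⟨x', h.right_mem, hx'⟩
  obtain ⟨i, hx, -, -, rfl⟩ := h
  obtain ⟨e, he, hmin⟩ := hcompact.exists_isMinOn hnonempty
    (f := fun w => |F.leafCoord i w - F.leafCoord i x|)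
    (((F.continuousOn_leafCoord i).mono fun w hw => hw.1.1).sub continuousOn_const).abs
  have hsub : F.leafSegment i x e ⊆ F.leafSegment i x x' := fun w hw =>
    ⟨hw.1, hw.2.1, uIcc_subset_uIcc left_mem_uIcc he.1.2.2 hw.2.2⟩
  refine ⟨e, he, _, hsub, ⟨i, hx, he.1.1, he.1.2.1, rfl⟩, fun w hw hwK => ?_⟩
  have hle : |F.leafCoord i e - F.leafCoord i x| ≤ |F.leafCoord i w - F.leafCoord i x| :=
    hmin ⟨hsub hw, hwK⟩
  have hleaf : F.leafCoord i w = F.leafCoord i e := by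
    rcases mem_uIcc.1 hw.2.2 with h | h
    · rw [abs_of_nonneg (by linarith), abs_of_nonneg (by linarith)] at hle
      linarith
    · rw [abs_of_nonpos (by linarith), abs_of_nonpos (by linarith)] at hle
      linarith
  exact F.eq_of_leafCoord_eq_of_transCoord_eq hw.1 he.1.1 hleaf (hw.2.1.trans he.1.2.1.symm)

theorem isOpen_setOf_exists_isLeafArc {W O : Set M} (hW : IsOpen W) (hO : IsOpen O) :
    IsOpen {x | ∃ x' ∈ O, ∃ A ⊆ W, F.IsLeafArc A x x'} := by
  refine isOpen_iff_mem_nhds.2 fun x ⟨x', hx'O, A, hAW, i, hx, hx', htrans, hA⟩ => ?_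
  rw [hA, leafSegment_eq_image, image_subset_iff] at hAW
  set y := F.transCoord i x
  set t' := F.leafCoord i x'
  have hprod : uIcc (F.leafCoord i x) t' ×ˢ {y} ⊆ (fun z => F.chartPoint i z.1 z.2) ⁻¹' W := by
    rintro ⟨t, _⟩ ⟨ht, rfl⟩
    exact hAW ht
  obtain ⟨J, N, hJ, hN, hJsub, hNsub, hJN⟩ := generalized_tube_lemma isCompact_uIcc
    isCompact_singleton (hW.preimage (F.continuous_chartPoint i)) hprod
  have hlast : F.chartPoint i t' y ∈ O := by
    rwa [← htrans, F.chartPoint_leafCoord_transCoord hx']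
  have hO' : ∀ᶠ y' in 𝓝 y, F.chartPoint i t' y' ∈ O :=
    (((F.continuous_chartPoint i).comp (f := fun y' => (t', y')) (by fun_prop)).tendsto
      y).eventually_mem (hO.mem_nhds hlast)
  have hJ' : ∀ᶠ t in 𝓝 (F.leafCoord i x), uIcc t (F.leafCoord i x) ⊆ J :=
    (tendsto_id.uIcc tendsto_const_nhds).eventually
      (eventually_smallSets_subset.2 (hJ.mem_nhds (hJsub left_mem_uIcc)))
  have htransN := (F.continuousAt_transCoord hx).eventually
    (hO'.and (hN.mem_nhds (hNsub rfl)))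
  filter_upwards [(F.continuousAt_leafCoord hx).eventually hJ', htransN,
    (F.isOpen i).mem_nhds hx] with v hvJ ⟨hvO, hvN⟩ hv
  refine ⟨_, hvO, _, ?_, by
    simpa only [F.chartPoint_leafCoord_transCoord hv] using
      F.isLeafArc_leafSegment_chartPoint i (F.transCoord i v) (F.leafCoord i v) t'⟩
  rintro _ ⟨t, ht, rfl⟩
  refine hJN (a := (t, F.transCoord i v)) ⟨?_, hvN⟩
  exact (uIcc_subset_uIcc_union_uIcc ht).elim (fun h => hvJ h) fun h => hJsub h

theorem saturated_of_forall_isLeafArc {K : Set M} (hK : IsClosed K)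
    (h : ∀ x ∈ K, ∃ W ∈ 𝓝 x, ∀ x', ∀ A ⊆ W, F.IsLeafArc A x x' → x' ∈ K) : F.Saturated K := by
  refine F.saturated_of_samePlaque fun x x' hxx' hx => ?_
  obtain ⟨i, hxi, hx'i, htrans⟩ := F.samePlaque_iff_exists.1 hxx'
  let c : ℝ → M := fun t => F.chartPoint i t (F.transCoord i x)
  have hc : Continuous c := F.continuous_chartPoint_left i _
  have hopen : IsOpen (c ⁻¹' K) := isOpen_iff_mem_nhds.2 fun s hs => by
    obtain ⟨W, hW, hWK⟩ := h _ hs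
    obtain ⟨ε, hε, hball⟩ := Metric.mem_nhds_iff.1 (hc.continuousAt hW)
    refine mem_of_superset (Metric.ball_mem_nhds s hε) fun t ht => ?_
    refine hWK _ _ (image_subset_iff.2 ?_) (F.isLeafArc_leafSegment_chartPoint i _ s t)
    rw [← segment_eq_uIcc]
    exact ((convex_ball s ε).segment_subset (Metric.mem_ball_self hε) ht).trans hball
  have huniv : c ⁻¹' K = univ := IsClopen.eq_univ ⟨hK.preimage hc, hopen⟩
    ⟨F.leafCoord i x, by
      change F.chartPoint i _ _ ∈ K
      rwa [F.chartPoint_leafCoord_transCoord hxi]⟩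
  have hmem : F.chartPoint i (F.leafCoord i x') (F.transCoord i x) ∈ K :=
    huniv.symm.subset (mem_univ _)
  rwa [htrans, F.chartPoint_leafCoord_transCoord hx'i] at hmem

end LeafArc

section FirstHit

universe v w

variable {S : Type v} [TopologicalSpace S] {Λ : Type w} [TopologicalSpace Λ] [LinearOrder Λ]
  {q : ℕ} {F : Foliation (S × Λ) 1 q} {i : F.ι} {x x' e e' e₀ : S × Λ} {A A' : Set (S × Λ)}
  {ρ ρ' ρ₀ β : Λ} {V : Set S}

/-- `A` is an arc inside a plaque which starts at `x`, ends at `e` and reaches the height `ρ` at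
`e` for the first time. -/
structure IsFirstHit (F : Foliation (S × Λ) 1 q) (x : S × Λ) (ρ : Λ) (A : Set (S × Λ))
    (e : S × Λ) : Prop where
  isLeafArc : F.IsLeafArc A x e
  snd_eq : e.2 = ρ
  snd_lt : ∀ w ∈ A, w ≠ e → w.2 < ρ

theorem IsFirstHit.ne (h : F.IsFirstHit x ρ A e) (hx : x.2 < ρ) : e ≠ x := by
  rintro rfl
  exact hx.ne h.snd_eq

theorem IsFirstHit.subset_prod_Ioc (h : F.IsFirstHit x ρ A e) (hA : A ⊆ V ×ˢ Ioi β) :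
    A ⊆ V ×ˢ Ioc β ρ := fun w hw => by
  refine ⟨(hA hw).1, (hA hw).2, ?_⟩
  rcases eq_or_ne w e with rfl | hne
  exacts [h.snd_eq.le, (h.snd_lt w hw hne).le]

theorem IsLeafArc.exists_isFirstHit [OrderClosedTopology Λ] (h : F.IsLeafArc A x x')
    (hx : x.2 < ρ) (hx' : ρ ≤ x'.2) : ∃ e ∈ A, ∃ B ⊆ A, F.IsFirstHit x ρ B e := by
  obtain ⟨e, ⟨heA, heρ⟩, B, hBA, hB, hfirst⟩ :=
    h.exists_first_mem (isClosed_Ici.preimage continuous_snd : IsClosed (Prod.snd ⁻¹' Ici ρ)) hx'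
  obtain ⟨v, hvB, hv⟩ := hB.isPreconnected.intermediate_value hB.left_mem hB.right_mem
    continuous_snd.continuousOn ⟨hx.le, heρ⟩
  obtain rfl := hfirst v hvB hv.ge
  exact ⟨v, heA, B, hBA, hB, hv, fun w hw hne => not_le.1 fun hle => hne (hfirst w hw hle)⟩

theorem IsFirstHit.mem_of_le (h : F.IsFirstHit x ρ A e) (h' : F.IsFirstHit x ρ' A' e')
    (hρ : ρ ≤ ρ') (hA : A ⊆ F.U i) (hA' : A' ⊆ F.U i)
    (hside : F.leafCoord i x < F.leafCoord i e ↔ F.leafCoord i x < F.leafCoord i e') :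
    e ∈ A' := by
  rcases h.isLeafArc.mem_or_mem h'.isLeafArc hA hA' hside with he | he'
  · exact he
  rcases eq_or_ne e' e with rfl | hne
  · exact h'.isLeafArc.right_mem
  · exact absurd (h'.snd_eq ▸ h.snd_lt e' he' hne) hρ.not_gt

theorem IsFirstHit.mem_of_mem (h : F.IsFirstHit x ρ A e) (h' : F.IsFirstHit x ρ' A' e')
    (hρ : ρ ≤ ρ') (hA : A ⊆ F.U i) (hA' : A' ⊆ F.U i) (hne : e₀ ≠ x) (h₀ : e₀ ∈ A)
    (h₀' : e₀ ∈ A') : e ∈ A' :=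
  h.mem_of_le h' hρ hA hA' <|
    (h.isLeafArc.leafCoord_lt_iff hA h₀ hne).symm.trans (h'.isLeafArc.leafCoord_lt_iff hA' h₀' hne)

theorem countable_setOf_isFirstHit {W : Set (S × Λ)} (hW : W ⊆ F.U i) :
    {e | ∃ A ⊆ W, F.IsFirstHit x ρ A e}.Countable := by
  refine countable_of_injective_of_countable_image
    (f := fun e => F.leafCoord i x < F.leafCoord i e) ?_ (to_countable _)
  rintro e ⟨A, hAW, h⟩ e' ⟨A', hAW', h'⟩ hside
  by_contra hne
  have he := h.mem_of_le h' le_rfl (hAW.trans hW) (hAW'.trans hW) (iff_of_eq hside)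
  exact (h'.snd_lt e he hne).ne h.snd_eq

theorem IsFirstHit.tendsto [OrderClosedTopology Λ] {X : Type*} {l : Filter X}
    (h : F.IsFirstHit x ρ A e) {u : X → S × Λ} (hu : ∀ᶠ n in l, u n ∈ A)
    (hlim : Tendsto (fun n => (u n).2) l (𝓝 ρ)) : Tendsto u l (𝓝 e) := by
  refine h.isLeafArc.isCompact.tendsto_nhds_of_unique_mapClusterPt hu fun w hw hclus => ?_
  by_contra hne
  have hclus' : ClusterPt w.2 (𝓝 ρ) :=
    (hclus.continuousAt_comp continuous_snd.continuousAt).clusterPt.mono hlim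
  exact (h.snd_lt w hw hne).ne (eq_of_nhds_neBot hclus')

variable [CountableInterFilter (atTop : Filter Λ)]

theorem exists_forall_exists_isFirstHit_mem [OrderClosedTopology Λ] (htube : F.IsTube V β)
    (hρ₀ : x.2 < ρ₀) (h : ∀ ρ, ∃ x', ρ < x'.2 ∧ ∃ A ⊆ V ×ˢ Ioi β, F.IsLeafArc A x x') :
    ∃ e₀ ≠ x, ∀ ρ ≥ ρ₀, ∃ e, ∃ A ⊆ V ×ˢ Ioi β, F.IsFirstHit x ρ A e ∧ e₀ ∈ A := by
  have : Nonempty Λ := ⟨β⟩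
  obtain ⟨i₀, hi₀⟩ := htube ρ₀
  obtain ⟨e₀, ⟨A₀, hA₀, h₀⟩, hall⟩ := exists_mem_forall_of_antitone
    (countable_setOf_isFirstHit (x := x) (ρ := ρ₀) hi₀)
    (P := fun e₀ ρ => ∃ ρ' ≥ ρ, ∃ e, ∃ A ⊆ V ×ˢ Ioi β, F.IsFirstHit x ρ' A e ∧ e₀ ∈ A)
    (fun _ _ _ hle ⟨ρ', hρ', hrest⟩ => ⟨ρ', hle.trans hρ', hrest⟩) fun ρ => by
      obtain ⟨x', hx', A, hA, harc⟩ := h (max ρ ρ₀)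
      obtain ⟨e, -, B, hBA, hB⟩ :=
        harc.exists_isFirstHit (hρ₀.trans_le (le_max_right ρ ρ₀)) hx'.le
      obtain ⟨e₀, he₀, B₀, hB₀, h₀⟩ :=
        hB.isLeafArc.exists_isFirstHit hρ₀ ((le_max_right ρ ρ₀).trans_eq hB.snd_eq.symm)
      exact ⟨e₀, ⟨B₀, h₀.subset_prod_Ioc (hB₀.trans (hBA.trans hA)), h₀⟩, _, le_max_left ρ ρ₀,
        e, B, hBA.trans hA, hB, he₀⟩
  refine ⟨e₀, h₀.ne hρ₀, fun ρ hρ => ?_⟩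
  obtain ⟨ρ', hρ', e', A', hA', h', he₀⟩ := hall ρ
  have hxρ : x.2 < ρ := hρ₀.trans_le hρ
  obtain ⟨e, he, B, hBA', hB⟩ := h'.isLeafArc.exists_isFirstHit hxρ (hρ'.trans_eq h'.snd_eq.symm)
  obtain ⟨i, hi⟩ := htube ρ'
  have hA'i : A' ⊆ F.U i := (h'.subset_prod_Ioc hA').trans hi
  have hA₀i : A₀ ⊆ F.U i :=
    (hA₀.trans (prod_mono_right (Ioc_subset_Ioc_right (hρ.trans hρ')))).trans hi
  exact ⟨e, B, hBA'.trans hA', hB, h₀.mem_of_le hB hρ hA₀i (hBA'.trans hA'i) <|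
    (h'.isLeafArc.leafCoord_lt_iff hA'i he₀ (h₀.ne hρ₀)).trans
      (h'.isLeafArc.leafCoord_lt_iff hA'i he (hB.ne hxρ)).symm⟩

end FirstHit

section Branch

universe v w

variable {S : Type v} [TopologicalSpace S] [TopologicalSpace.MetrizableSpace S] {Λ : Type w}
  [ConditionallyCompleteLinearOrder Λ] [TopologicalSpace Λ] [OrderTopology Λ] [NoMaxOrder Λ]
  [CountableInterFilter (atTop : Filter Λ)] {q : ℕ} {F : Foliation (S × Λ) 1 q}
  {x e₀ : S × Λ} {ρ₀ β : Λ} {V : Set S}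

theorem exists_isVerticalAbove_of_forall_isFirstHit (htube : F.IsTube V β) (hne : e₀ ≠ x)
    (h : ∀ ρ ≥ ρ₀, ∃ e, ∃ A ⊆ V ×ˢ Ioi β, F.IsFirstHit x ρ A e ∧ e₀ ∈ A) :
    ∃ z a, F.IsVerticalAbove z a := by
  let := TopologicalSpace.metrizableSpaceMetric S
  have : Nonempty S := ⟨x.1⟩
  choose! e A hA hhit he₀ using h
  have hsub : ∀ {ρ γ}, ρ₀ ≤ ρ → ρ ≤ γ → A ρ ⊆ V ×ˢ Ioc β γ := fun hρ hγ =>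
    ((hhit _ hρ).subset_prod_Ioc (hA _ hρ)).trans (prod_mono_right (Ioc_subset_Ioc_right hγ))
  obtain ⟨c, hc, hconst⟩ := exists_forall_eq_of_continuousWithinAt_Iio (b := ρ₀)
    (f := fun ρ => (e ρ).1) fun γ hγ => by
      obtain ⟨i, hi⟩ := htube γ
      have hbelow : ∀ᶠ ρ in 𝓝[<] γ, ρ ∈ Ioo ρ₀ γ := Ioo_mem_nhdsLT hγ
      have hmem : ∀ᶠ ρ in 𝓝[<] γ, e ρ ∈ A γ := hbelow.mono fun ρ hρ =>
        (hhit ρ hρ.1.le).mem_of_mem (hhit γ hγ.le) hρ.2.le ((hsub hρ.1.le hρ.2.le).trans hi)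
          ((hsub hγ.le le_rfl).trans hi) hne (he₀ ρ hρ.1.le) (he₀ γ hγ.le)
      have hlim : Tendsto (fun ρ => (e ρ).2) (𝓝[<] γ) (𝓝 γ) :=
        (tendsto_id.mono_left nhdsWithin_le_nhds).congr'
          (hbelow.mono fun ρ hρ => (hhit ρ hρ.1.le).snd_eq.symm)
      exact ((hhit γ hγ.le).tendsto hmem hlim).fst_nhds
  have heq : ∀ γ > c, e γ = ((e c).1, γ) := fun γ hγ =>
    Prod.ext (hconst γ hγ.le) (hhit γ (hc.trans hγ.le)).snd_eq
  refine ⟨(e c).1, c, fun γ γ' hγ hγ' => ?_⟩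
  obtain ⟨i, hi⟩ := htube (max γ γ')
  have hγA := (hsub (hc.trans hγ.le) (le_max_left γ γ')).trans hi
  have hγ'A := (hsub (hc.trans hγ'.le) (le_max_right γ γ')).trans hi
  have harc := (hhit γ (hc.trans hγ.le)).isLeafArc
  have harc' := (hhit γ' (hc.trans hγ'.le)).isLeafArc
  rw [← heq γ hγ, ← heq γ' hγ', F.samePlaque_iff_transCoord_eq (hγA harc.right_mem)
    (hγ'A harc'.right_mem), harc.transCoord_eq hγA harc.right_mem,
    harc'.transCoord_eq hγ'A harc'.right_mem]

theorem exists_isVerticalAbove_of_forall_exists_isLeafArc (htube : F.IsTube V β)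
    (h : ∀ ρ, ∃ x', ρ < x'.2 ∧ ∃ A ⊆ V ×ˢ Ioi β, F.IsLeafArc A x x') :
    ∃ z a, F.IsVerticalAbove z a := by
  obtain ⟨ρ₀, hρ₀⟩ := exists_gt x.2
  obtain ⟨e₀, hne, he₀⟩ := exists_forall_exists_isFirstHit_mem htube hρ₀ h
  exact exists_isVerticalAbove_of_forall_isFirstHit htube hne he₀

end Branch

section Horizontal

universe v w

variable {S : Type v} [TopologicalSpace S] {Λ : Type w} [TopologicalSpace Λ] {q : ℕ}

theorem exists_forall_isLeafArc_snd_le [LinearOrder Λ] [OrderClosedTopology Λ] [NoMaxOrder Λ]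
    [CountableInterFilter (atTop : Filter Λ)] {F : Foliation (S × Λ) 1 q} {V : Set S} {β : Λ}
    (hV : IsOpen V) (htube : F.IsTube V β)
    (h : ∀ x, ∃ ρ, ∀ x', ∀ A ⊆ V ×ˢ Ioi β, F.IsLeafArc A x x' → x'.2 ≤ ρ) (δ : Λ) :
    ∃ ρ, ∀ x x', ∀ A ⊆ V ×ˢ Ioi β, F.IsLeafArc A x x' → x.2 < δ → x'.2 ≤ ρ := by
  have : Nonempty Λ := ⟨β⟩
  obtain ⟨i, hi⟩ := htube δ
  obtain ⟨D, hDcount, hD⟩ := F.isSeparable_U i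
  choose f hf using h
  obtain ⟨ρ, hρ⟩ := exists_forall_lt_of_countable (hDcount.image f)
  refine ⟨ρ, fun x x' A hA harc hx => not_lt.1 fun hlt => ?_⟩
  have hxU : x ∈ F.U i := hi ⟨(hA harc.left_mem).1, (hA harc.left_mem).2, hx.le⟩
  obtain ⟨d, ⟨x'', hx'', A', hA', harc'⟩, hdD⟩ := mem_closure_iff.1 (hD hxU) _
    (isOpen_setOf_exists_isLeafArc (F := F) (hV.prod isOpen_Ioi)
      (isOpen_Ioi.preimage continuous_snd : IsOpen (Prod.snd ⁻¹' Ioi ρ)))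
    ⟨x', hlt, A, hA, harc⟩
  exact (hf d x'' A' hA' harc').not_gt ((hρ _ ⟨d, hdD, rfl⟩).trans hx'')

theorem exists_gt_forall_isLeafArc_snd_lt [ConditionallyCompleteLinearOrder Λ] [OrderTopology Λ]
    [NoMaxOrder Λ] [CountableInterFilter (atTop : Filter Λ)] {F : Foliation (S × Λ) 1 q} {β : Λ}
    {T : Set (Set S)} (hT : T.Countable) (hopen : ∀ V ∈ T, IsOpen V)
    (htube : ∀ V ∈ T, F.IsTube V β)
    (h : ∀ V ∈ T, ∀ x, ∃ ρ, ∀ x', ∀ A ⊆ V ×ˢ Ioi β, F.IsLeafArc A x x' → x'.2 ≤ ρ) :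
    ∃ α > β, ∀ V ∈ T, ∀ x x', ∀ A ⊆ V ×ˢ Ioi β, F.IsLeafArc A x x' → x.2 < α → x'.2 < α := by
  have : Nonempty Λ := ⟨β⟩
  choose! f hf using fun V hV =>
    exists_forall_isLeafArc_snd_le (hopen V hV) (htube V hV) (h V hV)
  choose g hg using fun δ => exists_forall_lt_of_countable (hT.image (f · δ))
  obtain ⟨α, hα, hclosed⟩ := exists_gt_forall_exists_mem_Ioo_le g β
  refine ⟨α, hα, fun V hV x x' A hA harc hx => ?_⟩
  obtain ⟨c, hc, hgc⟩ := hclosed _ hx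
  exact (hf V hV c x x' A hA harc hc.1).trans_lt ((hg c _ ⟨V, hV, rfl⟩).trans_le hgc)

theorem IsLeafArc.snd_eq [LinearOrder Λ] [OrderTopology Λ] [DenselyOrdered Λ] [NoMinOrder Λ]
    {F : Foliation (S × Λ) 1 q} {V : Set S} {α β : Λ} (hV : IsOpen V)
    (hα : ∀ x x', ∀ A ⊆ V ×ˢ Ioi β, F.IsLeafArc A x x' → x.2 < α → x'.2 < α)
    {x x' : S × Λ} {A : Set (S × Λ)} (h : F.IsLeafArc A x x') (hA : A ⊆ V ×ˢ Ioi β)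
    (hx : x.2 = α) : x'.2 = α := by
  rcases lt_trichotomy x'.2 α with hlt | heq | hgt
  · exact absurd hx (hα x' x A hA h.symm hlt).ne
  · exact heq
  have hreach : ∀ᶠ y in 𝓝 x, ∃ y' ∈ Prod.snd ⁻¹' Ioi α, ∃ B ⊆ V ×ˢ Ioi β, F.IsLeafArc B y y' :=
    (isOpen_setOf_exists_isLeafArc (hV.prod isOpen_Ioi)
      (isOpen_Ioi.preimage continuous_snd)).mem_nhds ⟨x', hgt, A, hA, h⟩
  have hbelow : Tendsto (fun t => (x.1, t)) (𝓝[<] α) (𝓝 x) :=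
    (Continuous.tendsto' (by fun_prop) α x (Prod.ext rfl hx.symm)).mono_left nhdsWithin_le_nhds
  obtain ⟨t, ⟨y', hy', B, hB, harc⟩, ht⟩ :=
    ((hbelow.eventually hreach).and self_mem_nhdsWithin).exists
  exact absurd hy' (hα _ y' B hB harc ht).not_gt

theorem exists_saturated_prod_singleton [CompactSpace S] [TopologicalSpace.MetrizableSpace S]
    [ConditionallyCompleteLinearOrder Λ] [OrderTopology Λ] [DenselyOrdered Λ] [NoMaxOrder Λ]
    [NoMinOrder Λ] [Nonempty Λ] [CountableInterFilter (atTop : Filter Λ)]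
    {F : Foliation (S × Λ) 1 q} (hvert : ∀ z a, ¬ F.IsVerticalAbove z a) :
    ∃ α, F.Saturated (univ ×ˢ {α}) := by
  obtain ⟨β, hβ⟩ := F.exists_forall_exists_mem_nhds_isTube
  choose V hV htube using hβ
  obtain ⟨t, ht⟩ := CompactSpace.elim_nhds_subcover (fun z => interior (V z))
    fun z => interior_mem_nhds.2 (hV z)
  have htube' : ∀ z, F.IsTube (interior (V z)) β := fun z => (htube z).mono_left interior_subset
  obtain ⟨α, hβα, hα⟩ := exists_gt_forall_isLeafArc_snd_lt (T := (fun z => interior (V z)) '' t)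
    (t.countable_toSet.image _) (by rintro _ ⟨z, -, rfl⟩; exact isOpen_interior)
    (by rintro _ ⟨z, -, rfl⟩; exact htube' z) (by
      rintro _ ⟨z, -, rfl⟩ x
      by_contra! hunbounded
      obtain ⟨z', a, hz'⟩ := exists_isVerticalAbove_of_forall_exists_isLeafArc (x := x) (htube' z)
        fun ρ => let ⟨x', A, hA, harc, hlt⟩ := hunbounded ρ; ⟨x', hlt, A, hA, harc⟩
      exact hvert z' a hz')
  refine ⟨α, saturated_of_forall_isLeafArc (isClosed_univ.prod isClosed_singleton) ?_⟩
  rintro x ⟨-, hx⟩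
  obtain ⟨z, hz, hxz⟩ := mem_iUnion₂.1 (ht.symm.subset (mem_univ x.1))
  exact ⟨interior (V z) ×ˢ Ioi β, prod_mem_nhds (isOpen_interior.mem_nhds hxz)
      (Ioi_mem_nhds (hβα.trans_eq hx.symm)), fun x' A hA harc =>
    ⟨mem_univ _, harc.snd_eq isOpen_interior (hα _ ⟨z, hz, rfl⟩) hA hx⟩⟩

end Horizontal

end Foliation

/-! ### Unordered pairs of nearby points on the two-sphere -/

theorem continuous_sym2Lift {Y Z : Type*} [TopologicalSpace Y] [TopologicalSpace Z]
    {f : {f : Y → Y → Z // ∀ a b, f a b = f b a}}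
    (hf : Continuous fun p : Y × Y ↦ f.1 p.1 p.2) : Continuous (Sym2.lift f) :=
  continuous_quot_lift _ hf

theorem eq_mul_I_add_of_exp_eq {L : ℝ → ℂ} (hL : Continuous L) {n : ℕ}
    (hexp : ∀ t : ℝ, Complex.exp (L t) = Complex.exp (n * t * Complex.I)) (t : ℝ) :
    L t = n * t * Complex.I + L 0 := by
  have h0 : Complex.exp (L 0) = 1 := by simpa using hexp 0
  refine congrFun (Complex.isCoveringMap_exp.eq_of_comp_eq
    (g₂ := fun t : ℝ ↦ n * t * Complex.I + L 0) hL (by fun_prop) ?_ 0 (by simp)) t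
  funext t
  simp [Complex.exp_add, h0, hexp]

theorem exists_norm_eq_one_div_pow_notMem_slitPlane {k : Metric.closedBall (0 : ℂ) 1 → ℂ}
    (hk : Continuous k) (hk0 : ∀ w, k w ≠ 0) {n : ℕ} (hn : n ≠ 0) :
    ∃ w, ‖w.1‖ = 1 ∧ k w / w.1 ^ n ∉ Complex.slitPlane := by
  have hconv := convex_closedBall (0 : ℂ) 1
  have := hconv.locallyPathConnectedSpace
  have := hconv.contractibleSpace ⟨0, by simp⟩
  obtain ⟨K, hK, -⟩ := Complex.isCoveringMapOn_exp.existsUnique_continuousMap_lifts ⟨k, hk⟩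
    (a₀ := ⟨0, by simp⟩) (Complex.exp_log (hk0 _)) hk0
  have hexp : ∀ w, Complex.exp (K w) = k w := fun w ↦ congrFun hK.2 w
  by_contra! hslit
  let e : ℝ → Metric.closedBall (0 : ℂ) 1 := fun t ↦
    ⟨Complex.exp (t * Complex.I), by simp [Complex.norm_exp_ofReal_mul_I]⟩
  have he : Continuous e := by fun_prop
  have hslit' (t : ℝ) : k (e t) / (e t : ℂ) ^ n ∈ Complex.slitPlane :=
    hslit _ (Complex.norm_exp_ofReal_mul_I t)
  have he0 (t : ℝ) : (e t : ℂ) ≠ 0 := Complex.exp_ne_zero _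
  let L : ℝ → ℂ := fun t ↦ K (e t) - Complex.log (k (e t) / (e t : ℂ) ^ n)
  have hL : Continuous L := by
    refine .sub (by fun_prop) (.clog (.div (by fun_prop) (by fun_prop) fun t ↦ ?_) hslit')
    exact pow_ne_zero _ (he0 t)
  have hperiod : L (2 * Real.pi) = L 0 := by
    have : e (2 * Real.pi) = e 0 := by simp [e]
    simp only [L, this]
  have hlinear := eq_mul_I_add_of_exp_eq hL (n := n) (fun t ↦ ?_) (2 * Real.pi)
  · rw [hperiod, right_eq_add] at hlinear
    simp [hn, Real.pi_ne_zero] at hlinear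
  · have := hk0 (e t)
    rw [Complex.exp_sub, hexp, Complex.exp_log (Complex.slitPlane_ne_zero (hslit' t)),
      div_div_cancel₀ (hk0 _), ← Complex.exp_nat_mul, mul_assoc]

/-- The unit sphere `𝕊²` in `ℝ³`. -/
local notation "𝕊²" => Metric.sphere (0 : EuclideanSpace ℝ (Fin 3)) 1

/-- The horizontal part `x₀ + i x₁` of a point of `ℝ³`. -/
def planar (x : EuclideanSpace ℝ (Fin 3)) : ℂ := x 0 + x 1 * Complex.I

@[fun_prop]
theorem continuous_planar : Continuous planar := by
  unfold planar
  fun_prop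

theorem norm_planar_sub_le (x y : EuclideanSpace ℝ (Fin 3)) :
    ‖planar x - planar y‖ ≤ dist x y := by
  have : planar x - planar y = (x 0 - y 0 : ℝ) + (x 1 - y 1 : ℝ) * Complex.I := by
    simp only [planar]
    push_cast
    ring
  rw [this, Complex.norm_add_mul_I, EuclideanSpace.dist_eq, Fin.sum_univ_three]
  refine Real.sqrt_le_sqrt ?_
  simp only [Real.dist_eq, sq_abs]
  exact le_add_of_nonneg_right (sq_nonneg _)

theorem normSq_planar (x : 𝕊²) : Complex.normSq (planar x) = (1 - x.1 2) * (1 + x.1 2) := by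
  have h := x.2
  rw [mem_sphere_zero_iff_norm, EuclideanSpace.norm_eq, Real.sqrt_eq_one, Fin.sum_univ_three] at h
  simp only [Real.norm_eq_abs, sq_abs] at h
  rw [planar, Complex.normSq_add_mul_I]
  linarith

theorem eq_of_planar_eq_of_apply_two_eq {x y : 𝕊²} (hp : planar x = planar y)
    (h2 : x.1 2 = y.1 2) : x = y := by
  have h0 : x.1 0 = y.1 0 := by simpa [planar] using congrArg Complex.re hp
  have h1 : x.1 1 = y.1 1 := by simpa [planar] using congrArg Complex.im hp
  ext i
  fin_cases i
  exacts [h0, h1, h2]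

/-- The difference of the stereographic projections of `x` and `y` from the pole `(0, 0, σ)`,
where `σ = ±1`, with denominators cleared so that it is defined on the whole sphere. -/
def stereoDiff (σ : ℝ) (x y : EuclideanSpace ℝ (Fin 3)) : ℂ :=
  (1 - σ * y 2 : ℝ) * planar x - (1 - σ * x 2 : ℝ) * planar y

theorem stereoDiff_swap (σ : ℝ) (x y : EuclideanSpace ℝ (Fin 3)) :
    stereoDiff σ x y = -stereoDiff σ y x := by
  simp [stereoDiff]

theorem eq_of_stereoDiff_eq_zero {σ : ℝ} (hσ : σ ^ 2 = 1) {x y : 𝕊²} (hx : σ * x.1 2 < 1)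
    (hy : σ * y.1 2 < 1) (h : stereoDiff σ x y = 0) : x = y := by
  have heq : ((1 - σ * y.1 2 : ℝ) : ℂ) * planar x = (1 - σ * x.1 2 : ℝ) * planar y :=
    sub_eq_zero.1 h
  have hnormSq := congrArg Complex.normSq heq
  simp only [Complex.normSq_mul, Complex.normSq_ofReal, normSq_planar] at hnormSq
  have hheight : σ * x.1 2 = σ * y.1 2 := by
    have : (1 - σ * x.1 2) * (1 - σ * y.1 2) * (σ * x.1 2 - σ * y.1 2) = 0 := by
      linear_combination hnormSq / 2 + (1 - σ * y.1 2) ^ 2 / 2 * (-x.1 2 ^ 2) * hσ +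
        (1 - σ * x.1 2) ^ 2 / 2 * y.1 2 ^ 2 * hσ
    exact sub_eq_zero.1 ((mul_eq_zero_iff_left
      (mul_pos (sub_pos.2 hx) (sub_pos.2 hy)).ne').1 this)
  have hσ0 : σ ≠ 0 := by rintro rfl; norm_num at hσ
  rw [hheight] at heq
  refine eq_of_planar_eq_of_apply_two_eq (mul_left_cancel₀ ?_ heq) (mul_left_cancel₀ hσ0 hheight)
  exact_mod_cast (sub_pos.2 hy).ne'

/-- The transition map between the two stereographic projections is the inversion
`s ↦ 1 / conj s`, whence `1 / s - 1 / t = -(s - t) / (s * t)` after clearing denominators. -/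
theorem mul_stereoDiff_one (x y : 𝕊²) :
    ((1 + x.1 2) * (1 + y.1 2) : ℝ) * stereoDiff 1 x y =
      -(planar x * planar y * starRingEnd ℂ (stereoDiff (-1) x y)) := by
  have hx := Complex.mul_conj (planar x)
  have hy := Complex.mul_conj (planar y)
  rw [normSq_planar] at hx hy
  simp only [stereoDiff, map_sub, map_mul, Complex.conj_ofReal]
  push_cast at hx hy ⊢
  linear_combination (1 + (y.1 2 : ℂ)) * planar y * hx - (1 + (x.1 2 : ℂ)) * planar x * hy

/-- The parametrisation of the hemisphere opposite to the pole `(0, 0, σ)`, where `σ = ±1`, by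
the closed unit disc. -/
def hemisphere {σ : ℝ} (hσ : σ ^ 2 = 1) (w : Metric.closedBall (0 : ℂ) 1) : 𝕊² :=
  ⟨!₂[w.1.re, w.1.im, -σ * √(1 - ‖w.1‖ ^ 2)], by
    have hw : 0 ≤ 1 - ‖w.1‖ ^ 2 :=
      sub_nonneg.2 ((sq_le_one_iff₀ (norm_nonneg _)).2 (mem_closedBall_zero_iff.1 w.2))
    rw [mem_sphere_zero_iff_norm, EuclideanSpace.norm_eq, Real.sqrt_eq_one, Fin.sum_univ_three]
    simp only [Matrix.cons_val, Real.norm_eq_abs, sq_abs, mul_pow, neg_sq, hσ, Real.sq_sqrt hw]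
    rw [Complex.sq_norm, Complex.normSq_apply]
    ring⟩

section Hemisphere

variable {σ : ℝ} (hσ : σ ^ 2 = 1)

theorem continuous_hemisphere : Continuous (hemisphere hσ) := by
  unfold hemisphere
  fun_prop

theorem planar_hemisphere (w : Metric.closedBall (0 : ℂ) 1) : planar (hemisphere hσ w) = w := by
  simp [planar, hemisphere]

theorem mul_hemisphere_apply_two_nonpos (w : Metric.closedBall (0 : ℂ) 1) :
    σ * (hemisphere hσ w).1 2 ≤ 0 := by
  have : σ * (hemisphere hσ w).1 2 = -√(1 - ‖w.1‖ ^ 2) := by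
    simp [hemisphere, ← mul_assoc, ← sq, hσ]
  rw [this]
  exact neg_nonpos.2 (Real.sqrt_nonneg _)

theorem hemisphere_eq_of_norm_eq_one {τ : ℝ} (hτ : τ ^ 2 = 1) {w : Metric.closedBall (0 : ℂ) 1}
    (hw : ‖w.1‖ = 1) : hemisphere hσ w = hemisphere hτ w := by
  simp [hemisphere, hw]

theorem mul_apply_two_lt_one_of_dist_lt {w : Metric.closedBall (0 : ℂ) 1} {x : 𝕊²}
    (hx : dist x (hemisphere hσ w) < 1 / 3) : σ * x.1 2 < 1 := by
  have habs : |σ| = 1 :=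
    (pow_eq_one_iff_of_nonneg (abs_nonneg σ) two_ne_zero).1 (by rw [sq_abs, hσ])
  have h2 : |x.1 2 - (hemisphere hσ w).1 2| ≤ dist x (hemisphere hσ w) :=
    PiLp.norm_apply_le (x.1 - (hemisphere hσ w).1) 2
  have : σ * (x.1 2 - (hemisphere hσ w).1 2) ≤ |x.1 2 - (hemisphere hσ w).1 2| := by
    simpa [abs_mul, habs] using le_abs_self (σ * (x.1 2 - (hemisphere hσ w).1 2))
  linarith [mul_hemisphere_apply_two_nonpos hσ w]

end Hemisphere

theorem sq_mem_slitPlane_of_re_pos {z : ℂ} (hz : 0 < z.re) : z ^ 2 ∈ Complex.slitPlane := by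
  rw [Complex.mem_slitPlane_iff, sq, Complex.mul_re, Complex.mul_im]
  obtain him | him := eq_or_ne z.im 0
  · left
    simpa [him] using hz.ne'
  · right
    simp [mul_comm z.im, ← two_mul, him, hz.ne']

theorem re_mul_pos_of_norm_sub_one_lt {u v : ℂ} (hu : ‖u - 1‖ < 1 / 3) (hv : ‖v - 1‖ < 1 / 3) :
    0 < (u * v).re := by
  have hnorm : ‖u * v - 1‖ < 1 := by
    calc ‖u * v - 1‖ = ‖(u - 1) * (v - 1) + (u - 1) + (v - 1)‖ := by ring_nf
      _ ≤ ‖u - 1‖ * ‖v - 1‖ + ‖u - 1‖ + ‖v - 1‖ := by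
        rw [← norm_mul]
        exact norm_add₃_le
      _ < 1 := by nlinarith [norm_nonneg (u - 1), norm_nonneg (v - 1)]
  have := (abs_lt.1 ((Complex.abs_re_le_norm _).trans_lt hnorm)).1
  rw [Complex.sub_re, Complex.one_re] at this
  linarith

/-- The square of `stereoDiff σ`, as a function of unordered pairs. -/
def stereoSq (σ : ℝ) : Sym2 𝕊² → ℂ :=
  Sym2.lift ⟨fun x y ↦ stereoDiff σ x y ^ 2, fun x y ↦ by simp only [stereoDiff_swap σ x y, neg_sq]⟩

theorem continuous_stereoSq (σ : ℝ) : Continuous (stereoSq σ) := by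
  refine continuous_sym2Lift ?_
  unfold stereoDiff
  fun_prop

theorem stereoSq_ne_zero {σ : ℝ} (hσ : σ ^ 2 = 1) {p : Sym2 𝕊²} (hp : ¬ p.IsDiag)
    (hlt : ∀ x ∈ p, σ * x.1 2 < 1) : stereoSq σ p ≠ 0 := by
  induction p with | _ x y
  rw [Sym2.mk_isDiag_iff] at hp
  exact pow_ne_zero 2 fun h ↦ hp
    (eq_of_stereoDiff_eq_zero hσ (hlt x (Sym2.mem_mk_left x y)) (hlt y (Sym2.mem_mk_right x y)) h)

theorem stereoSq_one_div_conj_div_pow_mem_slitPlane {σ : ℝ} (hσ : σ ^ 2 = 1) {p : Sym2 𝕊²}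
    {w : Metric.closedBall (0 : ℂ) 1} (hw : ‖w.1‖ = 1)
    (hp : ∀ x ∈ p, dist x (hemisphere hσ w) < 1 / 3) (hne : stereoSq (-1) p ≠ 0) :
    stereoSq 1 p / starRingEnd ℂ (stereoSq (-1) p) / w.1 ^ 4 ∈ Complex.slitPlane := by
  have hw0 : w.1 ≠ 0 := norm_ne_zero_iff.1 (hw.trans_ne one_ne_zero)
  have hnear (x) (hx : x ∈ p) : ‖planar x / w - 1‖ < 1 / 3 := by
    rw [div_sub_one hw0, norm_div, hw, div_one, ← planar_hemisphere hσ w]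
    exact (norm_planar_sub_le _ _).trans_lt (hp x hx)
  have hpos (x) (hx : x ∈ p) : 0 < 1 + x.1 2 := by
    have := mul_apply_two_lt_one_of_dist_lt (σ := -1) (by norm_num)
      (hemisphere_eq_of_norm_eq_one hσ (τ := -1) (by norm_num) hw ▸ hp x hx)
    linarith
  induction p with | _ x y
  have hx := Sym2.mem_mk_left x y
  have hy := Sym2.mem_mk_right x y
  have hr : 0 < (1 + x.1 2) * (1 + y.1 2) := mul_pos (hpos x hx) (hpos y hy)
  have hr0 : (((1 + x.1 2) * (1 + y.1 2) : ℝ) : ℂ) ≠ 0 := Complex.ofReal_ne_zero.2 hr.ne'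
  have hconj : starRingEnd ℂ (stereoDiff (-1) x y) ≠ 0 :=
    (map_ne_zero _).2 (pow_ne_zero_iff two_ne_zero |>.1 hne)
  have hquot : stereoSq 1 s(x, y) / starRingEnd ℂ (stereoSq (-1) s(x, y)) / w.1 ^ 4 =
      ((((1 + x.1 2) * (1 + y.1 2))⁻¹ : ℝ) * (planar x / w * (planar y / w))) ^ 2 := by
    simp only [stereoSq, Sym2.lift_mk, map_pow]
    rw [eq_div_of_mul_eq hr0 ((mul_comm _ _).trans (mul_stereoDiff_one x y)), Complex.ofReal_inv]
    field_simp
  rw [hquot]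
  refine sq_mem_slitPlane_of_re_pos ?_
  rw [Complex.re_ofReal_mul]
  exact mul_pos (inv_pos.2 hr) (re_mul_pos_of_norm_sub_one_lt (hnear x hx) (hnear y hy))

/-- Compare the pair field with the stereographic coordinates on both hemispheres: the squared
differences of the coordinates of the two points would give a nonvanishing function on the disc
whose restriction to the boundary circle has degree four. -/
theorem exists_isDiag_of_forall_dist_lt {P : 𝕊² → Sym2 𝕊²} (hP : Continuous P)
    (hclose : ∀ z, ∀ x ∈ P z, dist x z < 1 / 3) : ∃ z, (P z).IsDiag := by
  by_contra! hdiag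
  have hone : (1 : ℝ) ^ 2 = 1 := by norm_num
  have hneg : (-1 : ℝ) ^ 2 = 1 := by norm_num
  have hne {σ : ℝ} (hσ : σ ^ 2 = 1) (w) : stereoSq σ (P (hemisphere hσ w)) ≠ 0 :=
    stereoSq_ne_zero hσ (hdiag _) fun x hx ↦ mul_apply_two_lt_one_of_dist_lt hσ (hclose _ x hx)
  have hcont {σ : ℝ} (hσ : σ ^ 2 = 1) : Continuous fun w ↦ stereoSq σ (P (hemisphere hσ w)) :=
    (continuous_stereoSq σ).comp (hP.comp (continuous_hemisphere hσ))
  have hconj (w) : starRingEnd ℂ (stereoSq (-1) (P (hemisphere hneg w))) ≠ 0 :=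
    (map_ne_zero _).2 (hne hneg w)
  obtain ⟨w, hw, hslit⟩ := exists_norm_eq_one_div_pow_notMem_slitPlane
    ((hcont hone).div (Complex.continuous_conj.comp (hcont hneg)) hconj)
    (fun w ↦ div_ne_zero (hne hone w) (hconj w)) four_ne_zero
  simp only [Pi.div_apply, Function.comp_apply, hemisphere_eq_of_norm_eq_one hone hneg hw]
    at hslit
  exact hslit (stereoSq_one_div_conj_div_pow_mem_slitPlane hneg hw (hclose _) (hne hneg w))

/-! ### Saturated slices carry a field of unordered pairs -/

theorem continuousAt_of_strictMonoOn {X : Type*} [TopologicalSpace X] {g : X → ℝ → ℝ} {f : X → ℝ}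
    {a b c : ℝ} {x : X} (hfx : f x ∈ Ioo a b) (hf : ∀ᶠ x' in 𝓝 x, f x' ∈ Icc a b)
    (hmono : ∀ᶠ x' in 𝓝 x, StrictMonoOn (g x') (Icc a b))
    (hcont : ∀ s ∈ Icc a b, ContinuousAt (fun x' => g x' s) x)
    (hsol : ∀ᶠ x' in 𝓝 x, g x' (f x') = c) : ContinuousAt f x := by
  have hmx := hmono.self_of_nhds
  have hsx := hsol.self_of_nhds
  have hfx' := Ioo_subset_Icc_self hfx
  refine tendsto_order.2 ⟨fun d hd => ?_, fun d hd => ?_⟩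
  · have hlt : max d a < f x := max_lt hd hfx.1
    have hmem : max d a ∈ Icc a b := ⟨le_max_right _ _, hlt.le.trans hfx.2.le⟩
    have hval : g x (max d a) < c := hsx ▸ hmx hmem hfx' hlt
    filter_upwards [hf, hmono, hsol, (hcont _ hmem).eventually (gt_mem_nhds hval)]
      with x' hf' hmono' hsol' hval'
    exact (le_max_left _ _).trans_lt ((hmono'.lt_iff_lt hmem hf').1 (hsol' ▸ hval'))
  · have hlt : f x < min d b := lt_min hd hfx.2
    have hmem : min d b ∈ Icc a b := ⟨hfx.1.le.trans hlt.le, min_le_right _ _⟩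
    have hval : c < g x (min d b) := hsx ▸ hmx hfx' hmem hlt
    filter_upwards [hf, hmono, hsol, (hcont _ hmem).eventually (lt_mem_nhds hval)]
      with x' hf' hmono' hsol' hval'
    exact ((hmono'.lt_iff_lt hf' hmem).1 (hsol' ▸ hval')).trans_le (min_le_left _ _)

theorem strictMonoOn_abs_sub_of_injOn {f : ℝ → ℝ} {b : ℝ} (hb : 0 ≤ b)
    (hf : ContinuousOn f (Icc 0 b)) (hinj : InjOn f (Icc 0 b)) :
    StrictMonoOn (fun s => |f s - f 0|) (Icc 0 b) := by
  have h0 : (0 : ℝ) ∈ Icc 0 b := left_mem_Icc.2 hb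
  rcases hf.strictMonoOn_of_injOn_Icc' hb hinj with hmono | hanti
  · have habs : EqOn (fun s => |f s - f 0|) (fun s => f s - f 0) (Icc 0 b) := fun s hs =>
      abs_of_nonneg (sub_nonneg.2 (hmono.monotoneOn h0 hs hs.1))
    exact StrictMonoOn.congr (fun s hs t ht hst => sub_lt_sub_right (hmono hs ht hst) _) habs.symm
  · have habs : EqOn (fun s => |f s - f 0|) (fun s => f 0 - f s) (Icc 0 b) := fun s hs =>
      (abs_sub_comm _ _).trans (abs_of_nonneg (sub_nonneg.2 (hanti.antitoneOn h0 hs hs.1)))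
    exact StrictMonoOn.congr (fun s hs t ht hst => sub_lt_sub_left (hanti hs ht hst) _) habs.symm

theorem exists_inv_card_succ_lt_of_sum_eq_one {ι : Type*} [Fintype ι] {f : ι → ℝ}
    (hf : ∑ i, f i = 1) : ∃ i, ((Fintype.card ι : ℝ) + 1)⁻¹ < f i := by
  by_contra! hle
  have hsum : (1 : ℝ) ≤ Fintype.card ι * ((Fintype.card ι : ℝ) + 1)⁻¹ := by
    have hbound := Finset.sum_le_sum fun i (_ : i ∈ Finset.univ) => hle i
    rwa [hf, Finset.sum_const, Finset.card_univ, nsmul_eq_mul] at hbound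
  rw [← div_eq_mul_inv, le_div_iff₀ (by positivity)] at hsum
  linarith

namespace Foliation

section Slide

variable {S Λ : Type*} [TopologicalSpace S] [TopologicalSpace Λ] {q : ℕ}
  (F : Foliation (S × Λ) 1 q) {α : Λ} {i j : F.ι} {z : S}

/-- The point obtained from `z` by moving `(z, α)` along its leaf until the leaf coordinate of the
chart `i` has increased by `s`, and projecting to `S`; no projection is needed when the slice
`S × {α}` is saturated. -/
def slide (α : Λ) (i : F.ι) (z : S) (s : ℝ) : S :=
  (F.chartPoint i (F.leafCoord i (z, α) + s) (F.transCoord i (z, α))).1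

theorem continuousAt_slide (h : (z, α) ∈ F.U i) (s : ℝ) :
    ContinuousAt (fun p : S × ℝ => F.slide α i p.1 p.2) (z, s) := by
  have hl : ContinuousAt (fun p : S × ℝ => F.leafCoord i (p.1, α)) (z, s) :=
    (F.continuousAt_leafCoord h).comp (f := fun p : S × ℝ => (p.1, α)) (x := (z, s))
      (by fun_prop)
  have ht : ContinuousAt (fun p : S × ℝ => F.transCoord i (p.1, α)) (z, s) :=
    (F.continuousAt_transCoord h).comp (f := fun p : S × ℝ => (p.1, α)) (x := (z, s))
      (by fun_prop)
  exact ((continuous_fst.comp (F.continuous_chartPoint i)).continuousAt).comp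
    (f := fun p : S × ℝ => (F.leafCoord i (p.1, α) + p.2, F.transCoord i (p.1, α)))
    ((hl.add continuousAt_snd).prodMk ht)

theorem slide_zero (h : (z, α) ∈ F.U i) : F.slide α i z 0 = z := by
  rw [slide, add_zero, F.chartPoint_leafCoord_transCoord h]

variable {F} (hα : F.Saturated (univ ×ˢ {α}))

include hα

theorem Saturated.slide_eq (h : (z, α) ∈ F.U i) (s : ℝ) :
    (F.slide α i z s, α) =
      F.chartPoint i (F.leafCoord i (z, α) + s) (F.transCoord i (z, α)) := by
  have hplaque : F.samePlaque (z, α) (F.chartPoint i (F.leafCoord i (z, α) + s)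
      (F.transCoord i (z, α))) := by
    rw [F.samePlaque_iff_transCoord_eq h (F.chartPoint_mem _ _ _), transCoord_chartPoint]
  have hmem := hα (z, α) ⟨mem_univ z, rfl⟩ _ (Relation.EqvGen.rel _ _ hplaque)
  exact Prod.ext rfl hmem.2.symm

theorem Saturated.slide_mem (h : (z, α) ∈ F.U i) (s : ℝ) : (F.slide α i z s, α) ∈ F.U i := by
  rw [hα.slide_eq h]
  exact F.chartPoint_mem _ _ _

theorem Saturated.leafCoord_slide (h : (z, α) ∈ F.U i) (s : ℝ) :
    F.leafCoord i (F.slide α i z s, α) = F.leafCoord i (z, α) + s := by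
  rw [hα.slide_eq h, leafCoord_chartPoint]

theorem Saturated.transCoord_slide (h : (z, α) ∈ F.U i) (hj : (z, α) ∈ F.U j) {s : ℝ}
    (hs : (F.slide α i z s, α) ∈ F.U j) :
    F.transCoord j (F.slide α i z s, α) = F.transCoord j (z, α) := by
  refine F.transCoord_eq_of_transCoord_eq (hα.slide_mem h s) hs h hj ?_
  rw [hα.slide_eq h, transCoord_chartPoint]

end Slide

section LeafDisplacement

universe v w

variable {S : Type v} [MetricSpace S] {Λ : Type w} [TopologicalSpace Λ] {q : ℕ}

/-- Finitely many charts covering a saturated slice `S × {α}` and a subordinate partition of unity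
`ρ`, with scales chosen such that the points within `radius` of the support of `ρ i` lie in the
chart `i`, slides of length at most `len` in the chart `i` stay within `radius`, and a slide of
length `len` in some chart has a `ρ`-weighted leaf displacement greater than `disp`. -/
structure LeafwiseScale (F : Foliation (S × Λ) 1 q) (α : Λ) where
  /-- the charts -/
  charts : Finset F.ι
  /-- the partition of unity -/
  ρ : PartitionOfUnity charts S
  /-- the distance to which points stay in a chart -/
  radius : ℝ
  /-- the length of the slides -/
  len : ℝ
  /-- the weighted leaf displacement of the pairs to be constructed -/
  disp : ℝ
  saturated : F.Saturated (univ ×ˢ {α})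
  radius_pos : 0 < radius
  len_pos : 0 < len
  disp_pos : 0 < disp
  mem_U : ∀ {i : charts} {z w}, z ∈ tsupport (ρ i) → dist w z < radius → (w, α) ∈ F.U i
  dist_slide_lt : ∀ {i : charts} {z}, z ∈ tsupport (ρ i) → ∀ {s}, |s| ≤ len →
    dist (F.slide α i z s) z < radius
  exists_disp_lt : ∀ z, ∃ i, disp < ρ i z * len

theorem eventually_forall_dist_slide_lt {F : Foliation (S × Λ) 1 q} {α : Λ} {i : F.ι} {K : Set S}
    (hK : IsCompact K) (hKU : ∀ z ∈ K, (z, α) ∈ F.U i) {r : ℝ} (hr : 0 < r) :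
    ∀ᶠ s in 𝓝 0, ∀ z ∈ K, dist (F.slide α i z s) z < r := by
  refine hK.eventually_forall_of_forall_eventually fun z hz => ?_
  have hdist := (F.continuousAt_slide (hKU z hz) 0).dist continuousAt_fst
  have hlt : dist (F.slide α i z 0) z < r := by rwa [F.slide_zero (hKU z hz), dist_self]
  exact (continuous_swap.tendsto (0, z)).eventually (hdist.eventually (gt_mem_nhds hlt))

theorem exists_leafwiseScale [CompactSpace S] {F : Foliation (S × Λ) 1 q} {α : Λ}
    (hα : F.Saturated (univ ×ˢ {α})) {c : ℝ} (hc : 0 < c) :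
    ∃ G : F.LeafwiseScale α, G.radius < c := by
  let V (i : F.ι) : Set S := (fun z => (z, α)) ⁻¹' F.U i
  have hV (i) : IsOpen (V i) := (F.isOpen i).preimage (by fun_prop)
  obtain ⟨I, hI⟩ := isCompact_univ.elim_finite_subcover V hV
    fun z _ => mem_iUnion.2 (F.covers (z, α))
  obtain ⟨ρ, hρ⟩ := PartitionOfUnity.exists_isSubordinate isClosed_univ (fun i : I => V i)
    (fun i => hV i) (hI.trans_eq (iUnion_subtype (· ∈ I) fun i : I => V i).symm)
  have hcompact (i : I) : IsCompact (tsupport (ρ i)) := (isClosed_tsupport _).isCompact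
  choose r hr hrU using fun i : I => (hcompact i).exists_thickening_subset_open (hV i) (hρ i)
  obtain ⟨R, ⟨hRr, hRc⟩, hR⟩ : ∃ R, ((∀ i, R < r i) ∧ R < c) ∧ 0 < R :=
    (((eventually_all.2 fun i => nhdsWithin_le_nhds (gt_mem_nhds (hr i))).and
      (nhdsWithin_le_nhds (gt_mem_nhds hc))).and
      (self_mem_nhdsWithin : Ioi (0 : ℝ) ∈ 𝓝[>] 0)).exists
  obtain ⟨l, hl, hslide⟩ := Metric.nhds_basis_closedBall.eventually_iff.1
    (eventually_all.2 fun i => eventually_forall_dist_slide_lt (hcompact i) (hρ i) hR)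
  refine ⟨{
    charts := I
    ρ := ρ
    radius := R
    len := l
    disp := ((Fintype.card I : ℝ) + 1)⁻¹ * l
    saturated := hα
    radius_pos := hR
    len_pos := hl
    disp_pos := by positivity
    mem_U := fun {i _ _} hz hw => hrU i (Metric.mem_thickening_iff.2 ⟨_, hz, hw.trans (hRr i)⟩)
    dist_slide_lt := fun {i z} hz s hs => hslide (by simpa using hs) i z hz
    exists_disp_lt := fun z => ?_ }, hRc⟩
  obtain ⟨i, hi⟩ := exists_inv_card_succ_lt_of_sum_eq_one
    ((finsum_eq_sum_of_fintype _).symm.trans (ρ.sum_eq_one (mem_univ z)))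
  exact ⟨i, mul_lt_mul_of_pos_right hi hl⟩

namespace LeafwiseScale

variable {F : Foliation (S × Λ) 1 q} {α : Λ} (G : F.LeafwiseScale α) {i j : G.charts} {z w : S}
  {s σ : ℝ}

/-- The `ρ`-weighted leaf displacement from `z` to `w`: a version of the leafwise distance which
does not depend on a chart. -/
def displacement (z w : S) : ℝ :=
  ∑ j, G.ρ j z * |F.leafCoord j (w, α) - F.leafCoord j (z, α)|

/-- The weight of the chart `i` at `z` suffices to control the displacement of slides. -/
def IsActive (i : G.charts) (z : S) : Prop := G.disp < G.ρ i z * G.len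

/-- The points near `z` in the local leaf of `z` with leaf displacement `G.disp` from `z`. -/
def ends (z : S) : Set S :=
  {w | dist w z < G.radius ∧
    (∀ j, G.ρ j z ≠ 0 → F.transCoord j (w, α) = F.transCoord j (z, α)) ∧
    G.displacement z w = G.disp}

variable {G}

theorem mem_U_of_ne_zero (h : G.ρ i z ≠ 0) : (z, α) ∈ F.U i :=
  G.mem_U (subset_tsupport _ h) ((dist_self z).trans_lt G.radius_pos)

theorem IsActive.pos (h : G.IsActive i z) : 0 < G.ρ i z :=
  pos_of_mul_pos_left (G.disp_pos.trans h) G.len_pos.le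

theorem IsActive.mem_tsupport (h : G.IsActive i z) : z ∈ tsupport (G.ρ i) :=
  subset_tsupport _ h.pos.ne'

theorem IsActive.mem_U (h : G.IsActive i z) : (z, α) ∈ F.U i := mem_U_of_ne_zero h.pos.ne'

theorem IsActive.eventually (h : G.IsActive i z) : ∀ᶠ z' in 𝓝 z, G.IsActive i z' :=
  ((G.ρ i).continuous.mul continuous_const).continuousAt.eventually (lt_mem_nhds h)

theorem IsActive.slide_mem_U (h : G.IsActive i z) (hj : G.ρ j z ≠ 0) (hs : |s| ≤ G.len) :
    (F.slide α i z s, α) ∈ F.U j :=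
  G.mem_U (subset_tsupport _ hj) (G.dist_slide_lt h.mem_tsupport hs)

theorem IsActive.transCoord_slide (h : G.IsActive i z) (hj : G.ρ j z ≠ 0) (hs : |s| ≤ G.len) :
    F.transCoord j (F.slide α i z s, α) = F.transCoord j (z, α) :=
  G.saturated.transCoord_slide h.mem_U (mem_U_of_ne_zero hj) (h.slide_mem_U hj hs)

theorem continuousAt_displacement (h : dist w z < G.radius) :
    ContinuousAt (fun p : S × S => G.displacement p.1 p.2) (z, w) := by
  refine tendsto_finsetSum _ fun j _ => ?_
  by_cases hj : z ∈ tsupport (G.ρ j)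
  · have hz := (F.continuousAt_leafCoord (G.mem_U hj ((dist_self z).trans_lt G.radius_pos))).comp
      (f := fun p : S × S => (p.1, α)) (x := (z, w)) (by fun_prop)
    have hw := (F.continuousAt_leafCoord (G.mem_U hj h)).comp
      (f := fun p : S × S => (p.2, α)) (x := (z, w)) (by fun_prop)
    exact ((G.ρ j).continuous.comp continuous_fst).continuousAt.mul (hw.sub hz).abs
  · have hzero : ∀ᶠ p : S × S in 𝓝 (z, w), G.ρ j p.1 = 0 :=
      continuousAt_fst.eventually (notMem_tsupport_iff_eventuallyEq.1 hj)
    exact (continuousAt_const (y := (0 : ℝ))).congr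
      (hzero.mono fun p hp => by simp only [hp, zero_mul])

theorem IsActive.continuousAt_displacement_slide (h : G.IsActive i z) (hs : |s| ≤ G.len) :
    ContinuousAt (fun p : S × ℝ => G.displacement p.1 (F.slide α i p.1 p.2)) (z, s) :=
  (continuousAt_displacement (G.dist_slide_lt h.mem_tsupport hs)).comp
    (f := fun p : S × ℝ => (p.1, F.slide α i p.1 p.2)) (x := (z, s))
    (continuousAt_fst.prodMk (F.continuousAt_slide h.mem_U s))

theorem mul_abs_sub_le_displacement (i : G.charts) (z w : S) :
    G.ρ i z * |F.leafCoord i (w, α) - F.leafCoord i (z, α)| ≤ G.displacement z w :=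
  Finset.single_le_sum (f := fun j => G.ρ j z * |F.leafCoord j (w, α) - F.leafCoord j (z, α)|)
    (fun j _ => mul_nonneg (G.ρ.nonneg j z) (abs_nonneg _)) (Finset.mem_univ i)

theorem abs_mul_le_len (hσ : |σ| = 1) (hs : s ∈ Icc 0 G.len) : |σ * s| ≤ G.len := by
  rw [abs_mul, hσ, one_mul, abs_of_nonneg hs.1]
  exact hs.2

theorem IsActive.strictMonoOn_abs_leafCoord_slide (h : G.IsActive i z) (hσ : |σ| = 1)
    (hj : G.ρ j z ≠ 0) :
    StrictMonoOn (fun s => |F.leafCoord j (F.slide α i z (σ * s), α) - F.leafCoord j (z, α)|)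
      (Icc 0 G.len) := by
  have hmem (s) (hs : s ∈ Icc 0 G.len) : (F.slide α i z (σ * s), α) ∈ F.U j :=
    h.slide_mem_U hj (abs_mul_le_len hσ hs)
  have hcont : ContinuousOn (fun s => F.leafCoord j (F.slide α i z (σ * s), α))
      (Icc 0 G.len) := by
    refine (F.continuousOn_leafCoord j).comp (Continuous.continuousOn ?_) hmem
    refine Continuous.prodMk (continuous_iff_continuousAt.2 fun s => ?_) continuous_const
    exact (F.continuousAt_slide h.mem_U (σ * s)).comp (f := fun s => (z, σ * s)) (by fun_prop)
  have hinj : InjOn (fun s => F.leafCoord j (F.slide α i z (σ * s), α)) (Icc 0 G.len) := by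
    intro s hs t ht hst
    have htrans (r) (hr : r ∈ Icc 0 G.len) := h.transCoord_slide hj (abs_mul_le_len hσ hr)
    have heq := F.eq_of_leafCoord_eq_of_transCoord_eq (hmem s hs) (hmem t ht) hst
      ((htrans s hs).trans (htrans t ht).symm)
    have hlin := congrArg (F.leafCoord i) heq
    rw [G.saturated.leafCoord_slide h.mem_U, G.saturated.leafCoord_slide h.mem_U] at hlin
    have hσ0 : σ ≠ 0 := abs_pos.1 (hσ ▸ one_pos)
    exact mul_left_cancel₀ hσ0 (add_left_cancel hlin)
  have hmono := strictMonoOn_abs_sub_of_injOn G.len_pos.le hcont hinj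
  simpa only [mul_zero, F.slide_zero h.mem_U] using hmono

theorem IsActive.strictMonoOn_displacement_slide (h : G.IsActive i z) (hσ : |σ| = 1) :
    StrictMonoOn (fun s => G.displacement z (F.slide α i z (σ * s))) (Icc 0 G.len) := by
  intro s hs t ht hst
  refine Finset.sum_lt_sum (fun j _ => ?_) ⟨i, Finset.mem_univ i, ?_⟩
  · rcases eq_or_ne (G.ρ j z) 0 with hj | hj
    · simp only [hj, zero_mul, le_refl]
    · exact mul_le_mul_of_nonneg_left
        (h.strictMonoOn_abs_leafCoord_slide hσ hj hs ht hst).le (G.ρ.nonneg j z)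
  · exact mul_lt_mul_of_pos_left
      (h.strictMonoOn_abs_leafCoord_slide hσ h.pos.ne' hs ht hst) h.pos

theorem IsActive.exists_displacement_slide_eq (h : G.IsActive i z) (hσ : |σ| = 1) :
    ∃ s ∈ Ioo 0 G.len, G.displacement z (F.slide α i z (σ * s)) = G.disp := by
  have hcont : ContinuousOn (fun s => G.displacement z (F.slide α i z (σ * s)))
      (Icc 0 G.len) := fun s hs =>
    ((h.continuousAt_displacement_slide (abs_mul_le_len hσ hs)).comp
      (f := fun s => (z, σ * s)) (by fun_prop)).continuousWithinAt
  have hzero : G.displacement z (F.slide α i z (σ * 0)) < G.disp := by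
    simp only [mul_zero, F.slide_zero h.mem_U, displacement, sub_self, abs_zero,
      Finset.sum_const_zero, G.disp_pos]
  have hlen : G.disp < G.displacement z (F.slide α i z (σ * G.len)) := by
    refine h.trans_le (le_trans (le_of_eq ?_) (mul_abs_sub_le_displacement i z _))
    rw [G.saturated.leafCoord_slide h.mem_U, add_sub_cancel_left, abs_mul, hσ, one_mul,
      abs_of_pos G.len_pos]
  exact intermediate_value_Ioo G.len_pos.le hcont ⟨hzero, hlen⟩

theorem exists_continuousAt_displacement_slide_eq (i : G.charts) (hσ : |σ| = 1) :
    ∃ f : S → ℝ, ∀ z, G.IsActive i z →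
      f z ∈ Ioo 0 G.len ∧ G.displacement z (F.slide α i z (σ * f z)) = G.disp ∧
      ContinuousAt f z := by
  choose! f hf hdisp using fun z (h : G.IsActive i z) => h.exists_displacement_slide_eq hσ
  refine ⟨f, fun z h => ⟨hf z h, hdisp z h, ?_⟩⟩
  refine continuousAt_of_strictMonoOn (hf z h)
    (h.eventually.mono fun z' h' => Ioo_subset_Icc_self (hf z' h'))
    (h.eventually.mono fun z' h' => h'.strictMonoOn_displacement_slide hσ) (fun s hs => ?_)
    (h.eventually.mono hdisp)
  exact (h.continuousAt_displacement_slide (abs_mul_le_len hσ hs)).comp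
    (f := fun z => (z, σ * s)) (by fun_prop)

theorem IsActive.slide_mem_ends (h : G.IsActive i z) (hs : |s| ≤ G.len)
    (hdisp : G.displacement z (F.slide α i z s) = G.disp) : F.slide α i z s ∈ G.ends z :=
  ⟨G.dist_slide_lt h.mem_tsupport hs, fun _ hj => h.transCoord_slide hj hs, hdisp⟩

theorem IsActive.exists_slide_eq_of_mem_ends (h : G.IsActive i z) (hw : w ∈ G.ends z) :
    ∃ σ : ℝ, (σ = 1 ∨ σ = -1) ∧ ∃ s ∈ Icc 0 G.len, F.slide α i z (σ * s) = w := by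
  obtain ⟨hdist, htrans, hdisp⟩ := hw
  let l := F.leafCoord i (w, α) - F.leafCoord i (z, α)
  have hl : |l| ≤ G.len := by
    have hle := mul_abs_sub_le_displacement i z w
    rw [hdisp] at hle
    exact (lt_of_mul_lt_mul_left (hle.trans_lt h) h.pos.le).le
  have hslide : F.slide α i z l = w := by
    refine congrArg Prod.fst (F.eq_of_leafCoord_eq_of_transCoord_eq
      (G.saturated.slide_mem h.mem_U l) (G.mem_U h.mem_tsupport hdist) ?_ ?_)
    · rw [G.saturated.leafCoord_slide h.mem_U, add_sub_cancel]
    · rw [htrans i h.pos.ne', G.saturated.transCoord_slide h.mem_U h.mem_U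
        (G.saturated.slide_mem h.mem_U l)]
  rcases abs_choice l with habs | habs
  · exact ⟨1, .inl rfl, |l|, ⟨abs_nonneg l, hl⟩, by rw [habs, one_mul, hslide]⟩
  · exact ⟨-1, .inr rfl, |l|, ⟨abs_nonneg l, hl⟩, by rw [habs, neg_mul_neg, one_mul, hslide]⟩

theorem exists_continuousAt_mem_ends (i : G.charts) (hσ : |σ| = 1) :
    ∃ A : S → S, ∀ z, G.IsActive i z → ContinuousAt A z ∧ A z ∈ G.ends z ∧
      0 < σ * (F.leafCoord i (A z, α) - F.leafCoord i (z, α)) ∧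
      ∀ s ∈ Icc 0 G.len, F.slide α i z (σ * s) ∈ G.ends z → F.slide α i z (σ * s) = A z := by
  obtain ⟨f, hf⟩ := exists_continuousAt_displacement_slide_eq i hσ
  refine ⟨fun z => F.slide α i z (σ * f z), fun z h => ?_⟩
  obtain ⟨hmem, hdisp, hcont⟩ := hf z h
  have hmem' := Ioo_subset_Icc_self hmem
  refine ⟨?_, h.slide_mem_ends (abs_mul_le_len hσ hmem') hdisp, ?_, fun s hs hend => ?_⟩
  · exact (F.continuousAt_slide h.mem_U _).comp (f := fun z => (z, σ * f z))
      (continuousAt_id.prodMk (continuousAt_const.mul hcont))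
  · rw [G.saturated.leafCoord_slide h.mem_U, add_sub_cancel_left, ← mul_assoc, ← abs_mul_abs_self,
      hσ, one_mul, one_mul]
    exact hmem.1
  · rw [(h.strictMonoOn_displacement_slide hσ).injOn hs hmem' (hend.2.2.trans hdisp.symm)]

theorem exists_ends_eq_pair (i : G.charts) :
    ∃ A B : S → S, ∀ z, G.IsActive i z →
      ContinuousAt A z ∧ ContinuousAt B z ∧ A z ≠ B z ∧ G.ends z = {A z, B z} := by
  obtain ⟨A, hA⟩ := exists_continuousAt_mem_ends i (abs_one (α := ℝ))
  obtain ⟨B, hB⟩ := exists_continuousAt_mem_ends i ((abs_neg (1 : ℝ)).trans abs_one)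
  refine ⟨A, B, fun z h => ?_⟩
  obtain ⟨hAcont, hAmem, hApos, hAuniq⟩ := hA z h
  obtain ⟨hBcont, hBmem, hBneg, hBuniq⟩ := hB z h
  refine ⟨hAcont, hBcont, fun heq => ?_, Subset.antisymm (fun w hw => ?_) ?_⟩
  · rw [heq] at hApos
    linarith
  · obtain ⟨_, rfl | rfl, s, hs, rfl⟩ := h.exists_slide_eq_of_mem_ends hw
    · exact .inl (hAuniq s hs hw)
    · exact .inr (hBuniq s hs hw)
  · rintro w (rfl | rfl)
    · exact hAmem
    · exact hBmem

theorem exists_continuous_sym2_mem_iff (G : F.LeafwiseScale α) :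
    ∃ P : S → Sym2 S, Continuous P ∧ ∀ z, ¬(P z).IsDiag ∧ ∀ w, w ∈ P z ↔ w ∈ G.ends z := by
  choose A B hAB using exists_ends_eq_pair (G := G)
  choose I hI using G.exists_disp_lt
  let P (z : S) : Sym2 S := s(A (I z) z, B (I z) z)
  have hmem (z w) : w ∈ P z ↔ w ∈ G.ends z := by
    rw [(hAB (I z) z (hI z)).2.2.2, Sym2.mem_iff, mem_insert_iff, mem_singleton_iff]
  refine ⟨P, continuous_iff_continuousAt.2 fun z => ?_, fun z => ⟨?_, hmem z⟩⟩
  · obtain ⟨hA, hB, -, -⟩ := hAB (I z) z (hI z)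
    refine ((continuous_quot_mk.tendsto _).comp (hA.prodMk hB)).congr' ?_
    filter_upwards [IsActive.eventually (hI z)] with z' hz'
    refine Sym2.ext fun w => ?_
    rw [hmem, (hAB (I z) z' hz').2.2.2]
    exact Sym2.mem_iff
  · rw [Sym2.mk_isDiag_iff]
    exact (hAB (I z) z (hI z)).2.2.1

end LeafwiseScale

/-- The two points are found on the local leaf of `z`, one on either side of `z`. -/
theorem Saturated.exists_continuous_sym2 [CompactSpace S] {F : Foliation (S × Λ) 1 q} {α : Λ}
    (hα : F.Saturated (univ ×ˢ {α})) {c : ℝ} (hc : 0 < c) :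
    ∃ P : S → Sym2 S, Continuous P ∧ ∀ z, ¬(P z).IsDiag ∧ ∀ w ∈ P z, dist w z < c := by
  obtain ⟨G, hG⟩ := exists_leafwiseScale hα hc
  obtain ⟨P, hP, hends⟩ := G.exists_continuous_sym2_mem_iff
  exact ⟨P, hP, fun z => ⟨(hends z).1, fun w hw => (((hends z).2 w).1 hw).1.trans hG⟩⟩

end LeafDisplacement

theorem IsVerticalAbove.exists_isLeaf {S Λ : Type*} [TopologicalSpace S] [TopologicalSpace Λ]
    [LinearOrder Λ] [NoMaxOrder Λ] {p q : ℕ} {F : Foliation (S × Λ) p q} {z : S} {a : Λ}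
    (h : F.IsVerticalAbove z a) :
    ∃ L, F.IsLeaf L ∧ {w : S × Λ | w.1 = z ∧ a < w.2} ⊆ L := by
  obtain ⟨b, hb⟩ := exists_gt a
  refine ⟨_, ⟨(z, b), rfl⟩, ?_⟩
  rintro ⟨_, γ⟩ ⟨rfl, hγ⟩
  exact Relation.EqvGen.rel _ _ (h b γ hb hγ)

end Foliation

instance : PreconnectedSpace 𝕊² := by
  refine Subtype.preconnectedSpace (isPreconnected_sphere ?_ _ _)
  rw [← Module.finrank_eq_rank, finrank_euclideanSpace_fin]
  norm_num

theorem statement12_general {Λ : Type*} [ConditionallyCompleteLinearOrder Λ] [TopologicalSpace Λ]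
    [OrderTopology Λ] [DenselyOrdered Λ] [NoMaxOrder Λ] [NoMinOrder Λ] [Nonempty Λ]
    [CountableInterFilter (atTop : Filter Λ)] {q : ℕ} (F : Foliation (𝕊² × Λ) 1 q) :
    ∃ α : Λ, ∀ z : 𝕊², ∃ L, F.IsLeaf L ∧ {w : 𝕊² × Λ | w.1 = z ∧ α < w.2} ⊆ L := by
  by_cases hvert : ∃ z a, F.IsVerticalAbove z a
  · obtain ⟨z, a, h⟩ := hvert
    obtain ⟨α, hα⟩ := h.exists_forall
    exact ⟨α, fun z => (hα z).exists_isLeaf⟩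
  · push Not at hvert
    obtain ⟨α, hα⟩ := Foliation.exists_saturated_prod_singleton hvert
    obtain ⟨P, hP, hclose⟩ := hα.exists_continuous_sym2 (c := 1 / 3) (by norm_num)
    obtain ⟨z, hz⟩ := exists_isDiag_of_forall_dist_lt hP fun z => (hclose z).2
    exact absurd hz (hclose z).1

/-- Every dimension-one foliation on `𝕊² × 𝕃₊` is ultimately vertical:
beyond some `α ∈ 𝕃₊` it is the trivial product foliation by long rays. -/
theorem statement12
    (F : Foliation ((Metric.sphere (0 : EuclideanSpace ℝ (Fin 3)) 1) × LongRay) 1 2) :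
    ∃ α : LongRay, ∀ z : Metric.sphere (0 : EuclideanSpace ℝ (Fin 3)) 1,
      ∃ L, F.IsLeaf L ∧
        {w : (Metric.sphere (0 : EuclideanSpace ℝ (Fin 3)) 1) × LongRay |
          w.1 = z ∧ α < w.2} ⊆ L :=
  let _ := LongRay.conditionallyCompleteLinearOrder
  statement12_general F
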